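/- arXiv:nlin/0309078 — 13 statements merged into one kernel-verified Lean document; each statement's English description precedes it below -/
import Mathlib

section
/- Let P, Q ∈ ℂ[X] be coprime polynomials with n = max(deg P, deg Q) ≥ 1, defining the rational map R = P/Q : ℂP¹ → ℂP¹ of degree n. For a ∈ ℂ let ν(a) be the number of distinct complex roots of P − a·Q, plus 1 if deg(P − a·Q) < n (accounting for the preimage at infinity), and let ν(∞) be the number of distinct complex roots of Q, plus 1 if deg Q < n. Then ν(0) + ν(1) + ν(∞) ≥ n + 2 (equivalently, m := ν(0) + ν(1) + ν(∞) − n − 2 ≥ 0). Moreover, equality ν(0) + ν(1) + ν(∞) = n + 2 holds if and only if ν(a) = n for every a ∈ ℂ \ {0, 1}, i.e. if and only if R has no critical values outside {0, 1, ∞}. -/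
open Polynomial

lemma aux_mult (F G : ℂ[X]) (z : ℂ) (hF : F ≠ 0) (hz : F.eval z = 0) (hG : G.eval z ≠ 0) :
    (wronskian F G).rootMultiplicity z + 1 = F.rootMultiplicity z := by
  obtain ⟨u, hu, hnd⟩ := Polynomial.exists_eq_pow_rootMultiplicity_mul_and_not_dvd F hF z
  have hpos : 0 < F.rootMultiplicity z := (rootMultiplicity_pos hF).2 hz
  obtain ⟨m, hm⟩ := Nat.exists_eq_succ_of_ne_zero hpos.ne'
  rw [hm] at hu ⊢
  have hu0 : u.eval z ≠ 0 := fun h => hnd (dvd_iff_isRoot.2 h)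
  set B : ℂ[X] := (X - C z) * u * derivative G - C ((m : ℂ) + 1) * u * G - (X - C z) * derivative u * G with hB
  have hB0 : B.eval z ≠ 0 := by
    simp [hB]
    exact ⟨⟨by exact_mod_cast Nat.succ_ne_zero m, hu0⟩, hG⟩
  have hW : wronskian F G = (X - C z) ^ m * B := by
    rw [wronskian, hu, hB]
    simp only [derivative_mul, derivative_X_sub_C_pow]
    simp [Nat.succ_eq_add_one, pow_succ]
    ring
  have hBne : B ≠ 0 := by rintro h; simp [h] at hB0
  rw [hW, rootMultiplicity_mul (mul_ne_zero (pow_ne_zero _ (X_sub_C_ne_zero z)) hBne),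
    rootMultiplicity_X_sub_C_pow, rootMultiplicity_eq_zero hB0]

lemma aux_deg (F G : ℂ[X]) (hF : F ≠ 0) (h : F.natDegree < G.natDegree) :
    (wronskian F G).natDegree + 1 = F.natDegree + G.natDegree := by
  obtain ⟨k, hk⟩ := Nat.exists_eq_succ_of_ne_zero (show G.natDegree ≠ 0 by omega)
  have hG : G ≠ 0 := by rintro rfl; simp at h
  have hf : F.coeff F.natDegree ≠ 0 := by simpa using hF
  have hg : G.coeff (k+1) ≠ 0 := by
    have : G.coeff G.natDegree ≠ 0 := by simpa using hG
    rwa [hk] at this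
  have hc1 : (F * derivative G).coeff (F.natDegree + k) = F.coeff F.natDegree * (G.coeff (k+1) * (k+1)) := by
    rw [coeff_mul_add_eq_of_natDegree_le le_rfl ((natDegree_derivative_le G).trans (by omega)), coeff_derivative]
  have hc2 : (derivative F * G).coeff (F.natDegree + k) = F.coeff F.natDegree * F.natDegree * G.coeff (k+1) := by
    rcases hd : F.natDegree with _ | d
    · rw [eq_C_of_natDegree_eq_zero hd]; simp
    · rw [show d + 1 + k = d + (k+1) by ring, coeff_mul_add_eq_of_natDegree_le ((natDegree_derivative_le F).trans (by omega)) (by omega), coeff_derivative]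
      push_cast; ring
  have hc : (wronskian F G).coeff (F.natDegree + k) ≠ 0 := by
    rw [wronskian, coeff_sub, hc1, hc2]
    rw [show F.coeff F.natDegree * (G.coeff (k+1) * (k+1)) - F.coeff F.natDegree * F.natDegree * G.coeff (k+1) = F.coeff F.natDegree * G.coeff (k+1) * (((k+1 : ℕ) : ℂ) - (F.natDegree : ℂ)) by push_cast; ring]
    refine mul_ne_zero (mul_ne_zero hf hg) (sub_ne_zero.2 ?_)
    intro h'
    have := Nat.cast_injective h'
    omega
  have h1 := le_natDegree_of_ne_zero hc
  have h2 : (wronskian F G).natDegree < F.natDegree + G.natDegree :=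
    natDegree_wronskian_lt_add (by intro h0; simp [h0] at hc)
  omega

noncomputable def auxW (n : ℕ) (W : ℂ[X]) : Option ℂ → ℕ
  | none => 2 * n - 2 - W.natDegree
  | some z => W.rootMultiplicity z

def auxVan (n : ℕ) (F : ℂ[X]) : Option ℂ → Prop
  | none => F.natDegree < n
  | some z => F.eval z = 0

noncomputable def auxT (W : ℂ[X]) : Finset (Option ℂ) := Finset.insertNone W.roots.toFinset

open Classical in
lemma aux_count (n : ℕ) (F G : ℂ[X]) (hFG : IsCoprime F G) (hF : F ≠ 0)
    (hn : n = max F.natDegree G.natDegree) (hn1 : 1 ≤ n) (hW : wronskian F G ≠ 0) :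
    F.roots.toFinset.card + (if F.natDegree < n then 1 else 0) +
      ∑ x ∈ auxT (wronskian F G), (if auxVan n F x then auxW n (wronskian F G) x else 0) = n := by
  have key : ∑ z ∈ F.roots.toFinset, ((wronskian F G).rootMultiplicity z + 1) = F.natDegree := by
    rw [(IsAlgClosed.splits F).natDegree_eq_card_roots, ← Multiset.toFinset_sum_count_eq]
    refine Finset.sum_congr rfl fun z hz => ?_
    have hz' : F.eval z = 0 := by
      simpa [hF] using hz
    rw [count_roots]
    refine aux_mult F G z hF hz' fun hg => ?_
    obtain ⟨a, b, hab⟩ := hFG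
    have := congrArg (eval z) hab
    simp [hz', hg] at this
  have key2 : ∑ z ∈ (wronskian F G).roots.toFinset, (if F.eval z = 0 then (wronskian F G).rootMultiplicity z else 0)
      = ∑ z ∈ F.roots.toFinset, (wronskian F G).rootMultiplicity z := by
    rw [← Finset.sum_filter]
    refine Finset.sum_subset ?_ ?_
    · intro z hz
      simp [hF] at hz ⊢
      exact hz.2
    · intro z hz hz2
      simp [hF, hW] at hz hz2 ⊢
      exact fun h => hz2 h hz
  rw [Finset.sum_add_distrib] at key
  simp only [Finset.sum_const, smul_eq_mul, mul_one] at key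
  rw [auxT, Finset.sum_insertNone]
  have key3 : ∑ z ∈ (wronskian F G).roots.toFinset,
      (if auxVan n F (some z) then auxW n (wronskian F G) (some z) else 0)
      = ∑ z ∈ F.roots.toFinset, (wronskian F G).rootMultiplicity z := by
    rw [← key2]
    refine Finset.sum_congr rfl fun z _ => ?_
    by_cases hz : F.eval z = 0
    · rw [if_pos hz, if_pos (show auxVan n F (some z) from hz)]; rfl
    · rw [if_neg hz, if_neg (show ¬ auxVan n F (some z) from hz)]
  have key4 : (if auxVan n F none then auxW n (wronskian F G) none else 0)
      = if F.natDegree < n then 2 * n - 2 - (wronskian F G).natDegree else 0 := by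
    by_cases hz : F.natDegree < n
    · rw [if_pos hz, if_pos (show auxVan n F none from hz)]; rfl
    · rw [if_neg hz, if_neg (show ¬ auxVan n F none from hz)]
  rw [key3, key4]
  split_ifs with h
  · have := aux_deg F G hF (by omega)
    omega
  · omega

lemma aux_comb {α β : Type*} [DecidableEq β] (T : Finset α) (w : α → ℕ) (val : α → β) (ν : β → ℕ) (n : ℕ)
    (hs : ∑ x ∈ T, w x + 2 = 2 * n)
    (hv : ∀ v, ν v + ∑ x ∈ T, (if val x = v then w x else 0) = n)
    (a b c : β) (hab : a ≠ b) (hac : a ≠ c) (hbc : b ≠ c) :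
    n + 2 ≤ ν a + ν b + ν c ∧ (ν a + ν b + ν c = n + 2 ↔ ∀ v, v ≠ a → v ≠ b → v ≠ c → ν v = n) := by
  have hsplit : ∑ x ∈ T, w x = ∑ x ∈ T, (if val x = a then w x else 0) +
      ∑ x ∈ T, (if val x = b then w x else 0) + ∑ x ∈ T, (if val x = c then w x else 0) +
      ∑ x ∈ T, (if val x ≠ a ∧ val x ≠ b ∧ val x ≠ c then w x else 0) := by
    simp only [← Finset.sum_add_distrib]
    refine Finset.sum_congr rfl fun x _ => ?_
    by_cases h1 : val x = a
    · simp [h1, hab, hac]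
    by_cases h2 : val x = b
    · simp [h2, hab.symm, hbc]
    by_cases h3 : val x = c
    · simp [h3, hac.symm, hbc.symm]
    simp [h1, h2, h3]
  have ha := hv a
  have hb := hv b
  have hc := hv c
  refine ⟨by omega, ?_⟩
  have : ν a + ν b + ν c = n + 2 ↔ ∑ x ∈ T, (if val x ≠ a ∧ val x ≠ b ∧ val x ≠ c then w x else 0) = 0 := by omega
  rw [this, Finset.sum_eq_zero_iff]
  constructor
  · intro h v h1 h2 h3
    have := hv v
    rw [Finset.sum_eq_zero] at this
    · simpa using this
    · intro x hx
      have h7 := h x hx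
      split_ifs with h4
      · subst h4; simpa [h1, h2, h3] using h7
      · rfl
  · intro h x hx
    split_ifs with h4
    · have h5 := hv (val x)
      rw [h _ h4.1 h4.2.1 h4.2.2] at h5
      have h6 : ∑ y ∈ T, (if val y = val x then w y else 0) = 0 := by omega
      simpa using (Finset.sum_eq_zero_iff.1 h6) x hx
    · rfl

open Classical in
noncomputable def auxVal (n : ℕ) (P Q : ℂ[X]) : Option ℂ → Option ℂ
  | none => if Q.natDegree < n then none else some (P.coeff n / Q.coeff n)
  | some z => if Q.eval z = 0 then none else some (P.eval z / Q.eval z)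

lemma aux_lt_iff (n : ℕ) (hn1 : 1 ≤ n) (F : ℂ[X]) (hF : F.natDegree ≤ n) :
    F.natDegree < n ↔ F.coeff n = 0 := by
  constructor
  · exact coeff_eq_zero_of_natDegree_lt
  · intro h
    refine lt_of_le_of_ne hF fun h' => ?_
    rw [← h', coeff_natDegree, leadingCoeff_eq_zero] at h
    simp [h] at h'
    omega

lemma aux_val_none (n : ℕ) (P Q : ℂ[X]) (x : Option ℂ) : auxVan n Q x ↔ auxVal n P Q x = none := by
  cases x <;> simp [auxVan, auxVal]

lemma aux_val_some (n : ℕ) (P Q : ℂ[X]) (hcop : IsCoprime P Q)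
    (hn : n = max P.natDegree Q.natDegree) (hn1 : 1 ≤ n) (a : ℂ) (x : Option ℂ) :
    auxVan n (P - C a * Q) x ↔ auxVal n P Q x = some a := by
  cases x with
  | none =>
    simp only [auxVan, auxVal]
    have hd : (P - C a * Q).natDegree ≤ n :=
      (natDegree_sub_le _ _).trans (max_le (by omega) ((natDegree_C_mul_le _ _).trans (by omega)))
    rw [aux_lt_iff n hn1 _ hd]
    have hP := aux_lt_iff n hn1 P (by omega)
    have hQ := aux_lt_iff n hn1 Q (by omega)
    have : ¬ (P.coeff n = 0 ∧ Q.coeff n = 0) := by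
      rw [← hP, ← hQ]; omega
    split_ifs with h
    · rw [hQ] at h
      simp [h] at this ⊢; exact this
    · rw [hQ] at h
      simp [div_eq_iff h, sub_eq_zero]
  | some z =>
    simp only [auxVan, auxVal]
    split_ifs with h
    · simp [h]
      intro hp
      obtain ⟨u, v, hab⟩ := hcop
      have := congrArg (eval z) hab
      simp [hp, h] at this
    · simp [div_eq_iff h, sub_eq_zero]

theorem stmt_0 (P Q : Polynomial ℂ) (hcop : IsCoprime P Q)
    (n : ℕ) (hn : n = max P.natDegree Q.natDegree) (hn1 : 1 ≤ n)
    (ν : ℂ → ℕ) (νinf : ℕ)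
    (hν : ∀ a : ℂ, ν a =
      (P - Polynomial.C a * Q).roots.toFinset.card +
        (if (P - Polynomial.C a * Q).natDegree < n then 1 else 0))
    (hνinf : νinf = Q.roots.toFinset.card + (if Q.natDegree < n then 1 else 0)) :
    n + 2 ≤ ν 0 + ν 1 + νinf ∧
      (ν 0 + ν 1 + νinf = n + 2 ↔ ∀ a : ℂ, a ≠ 0 → a ≠ 1 → ν a = n) := by
  classical
  have hW : wronskian P Q ≠ 0 := by
    intro h
    obtain ⟨h1, h2⟩ := hcop.wronskian_eq_zero_iff.1 h
    have := derivative_eq_zero.1 h1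
    have := derivative_eq_zero.1 h2
    omega
  have hQ0 : Q ≠ 0 := by
    rintro rfl; simp at hW
  have hWa : ∀ a, wronskian (P - C a * Q) Q = wronskian P Q := by
    intro a; simp [wronskian]; ring
  have hWi : wronskian Q (-P) = wronskian P Q := by
    simp [wronskian]; ring
  have hcopa : ∀ a, IsCoprime (P - C a * Q) Q := by
    intro a
    have := hcop.add_mul_right_left (-C a)
    rwa [neg_mul, ← sub_eq_add_neg] at this
  have hFa : ∀ a, P - C a * Q ≠ 0 := by
    intro a h
    have := hWa a
    rw [h] at this
    exact hW (by simpa using this.symm)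
  have hdega : ∀ a, n = max (P - C a * Q).natDegree Q.natDegree := by
    intro a
    have h1 : (C a * Q).natDegree ≤ Q.natDegree := natDegree_C_mul_le _ _
    have h2 := natDegree_sub_le P (C a * Q)
    have h3 : P.natDegree ≤ max (P - C a * Q).natDegree (C a * Q).natDegree := by
      simpa using natDegree_add_le (P - C a * Q) (C a * Q)
    omega
  have hca : ∀ a, ν a + ∑ x ∈ auxT (wronskian P Q),
      (if auxVal n P Q x = some a then auxW n (wronskian P Q) x else 0) = n := by
    intro a
    have := aux_count n _ Q (hcopa a) (hFa a) (hdega a) hn1 (by rwa [hWa])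
    rw [← hν, hWa] at this
    simpa only [aux_val_some n P Q hcop hn hn1] using this
  have hci : νinf + ∑ x ∈ auxT (wronskian P Q),
      (if auxVal n P Q x = none then auxW n (wronskian P Q) x else 0) = n := by
    have := aux_count n Q (-P) hcop.symm.neg_right hQ0 (by rw [natDegree_neg]; omega) hn1 (by rwa [hWi])
    rw [← hνinf, hWi] at this
    simpa only [aux_val_none n P Q] using this
  have hWd : (wronskian P Q).natDegree + 2 ≤ 2 * n := by
    by_cases hq : Q.natDegree < n
    · have := aux_deg Q (-P) hQ0 (by rw [natDegree_neg]; omega)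
      rw [hWi, natDegree_neg] at this
      omega
    · have hx : auxVal n P Q none = some (P.coeff n / Q.coeff n) := by simp [auxVal, hq]
      rw [← aux_val_some n P Q hcop hn hn1] at hx
      simp only [auxVan] at hx
      have := aux_deg _ Q (hFa (P.coeff n / Q.coeff n)) (by omega)
      rw [hWa] at this
      omega
  have hsum : ∑ x ∈ auxT (wronskian P Q), auxW n (wronskian P Q) x + 2 = 2 * n := by
    rw [auxT, Finset.sum_insertNone]
    simp only [auxW]
    have : ∑ z ∈ (wronskian P Q).roots.toFinset, (wronskian P Q).rootMultiplicity z = (wronskian P Q).natDegree := by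
      rw [(IsAlgClosed.splits (wronskian P Q)).natDegree_eq_card_roots, ← Multiset.toFinset_sum_count_eq]
      simp
    omega
  have := aux_comb (auxT (wronskian P Q)) (auxW n (wronskian P Q)) (auxVal n P Q)
    (fun v => v.elim νinf ν) n hsum (by
      intro v
      cases v with
      | none => exact hci
      | some a => exact hca a) (some 0) (some 1) none (by simp) (by simp) (by simp)
  refine ⟨this.1, this.2.trans ⟨fun h a h0 h1 => ?_, fun h v h0 h1 h2 => ?_⟩⟩
  · exact h (some a) (by simpa using h0) (by simpa using h1) (by simp)
  · cases v with
    | none => exact absurd rfl h2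
    | some a => exact h a (by simpa using h0) (by simpa using h1)
end

section
/- Fix θ ∈ ℂ. Let U ⊆ ℂ \ {0, 1} be open and let y : U → ℂ be twice complex differentiable with y(t) ∉ {0, 1, t} for all t ∈ U. Suppose y satisfies the algebraic equation t/y(t)² − (t−1)/(y(t)−1)² + t(t−1)/(y(t)−t)² = 0 identically on U, and that at every t ∈ U the partial derivative in y of the left-hand side, −2t/y³ + 2(t−1)/(y−1)³ − 2t(t−1)/(y−t)³, is nonzero. Then y solves the sixth Painlevé equation PVI(α,β,γ,δ) on U with θ-tuple (θ₀, θ₁, θ_t, θ_∞) = (θ, θ, θ, 1/2), i.e. with α = 1/8, β = −θ²/2, γ = θ²/2, δ = (1 − θ²)/2. -/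
lemma aux_param (t y : ℂ) (h0 : y ≠ 0) (h1 : y ≠ 1) (ht : y ≠ t)
    (h : t*(y-1)^2*(y-t)^2 - (t-1)*y^2*(y-t)^2 + t*(t-1)*y^2*(y-1)^2 = 0) :
    ∃ s : ℂ, 2*s+1 ≠ 0 ∧ s^2+s+1 ≠ 0 ∧ y = s^2*(s+2)/(s^2+s+1) ∧ t = s^3*(s+2)/(2*s+1) := by
  have h1' : y - 1 ≠ 0 := sub_ne_zero.mpr h1
  have ht' : t - y ≠ 0 := sub_ne_zero.mpr (Ne.symm ht)
  obtain ⟨q, hq⟩ : ∃ q, q = (t-y)/(y*(y-1)) := ⟨_, rfl⟩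
  have hq0 : q ≠ 0 := by rw [hq]; exact div_ne_zero ht' (mul_ne_zero h0 h1')
  have hT : t = y + q*y*(y-1) := by rw [hq]; field_simp; ring
  have hquad : (q*y)^2 + (2-q-2*q^2)*(q*y) + (q-1)^2*(q+1) = 0 := by
    have : y^3*(y-1)^3*((q*y)^2 + (2-q-2*q^2)*(q*y) + (q-1)^2*(q+1)) = 0 := by
      rw [← h, hT]; ring
    exact (mul_eq_zero.mp this).resolve_left (mul_ne_zero (pow_ne_zero _ h0) (pow_ne_zero _ h1'))
  have key : ∀ s : ℂ, s^2+s+1 = q*(2*s+1) → 2*s+1 ≠ 0 → q*y*(2*s+1) = s^2*(s+2) →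
      ∃ s : ℂ, 2*s+1 ≠ 0 ∧ s^2+s+1 ≠ 0 ∧ y = s^2*(s+2)/(s^2+s+1) ∧ t = s^3*(s+2)/(2*s+1) := by
    intro s hs hv hy
    have hw : s^2+s+1 ≠ 0 := by rw [hs]; exact mul_ne_zero hq0 hv
    have hY : y = s^2*(s+2)/(s^2+s+1) := by
      rw [eq_div_iff hw, hs, ← hy]; ring
    refine ⟨s, hv, hw, hY, ?_⟩
    have hv' : s*2+1 ≠ 0 := by rwa [mul_comm] at hv
    have hw' : s*(s+1)+1 ≠ 0 := by convert hw using 1; ring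
    have hQ : q = (s^2+s+1)/(2*s+1) := by rw [eq_div_iff hv, hs]
    rw [hT, hQ, hY]; field_simp; ring
  obtain ⟨r, hr⟩ := IsAlgClosed.exists_pow_nat_eq (4*q^2-3) (n := 2) (by norm_num)
  obtain ⟨s, hsdef⟩ : ∃ s, s = (2*q-1+r)/2 := ⟨_, rfl⟩
  have hs : s^2+s+1 = q*(2*s+1) := by rw [hsdef]; linear_combination (1/4)*hr
  have hv : 2*s+1 ≠ 0 := by
    intro hv
    have : (3:ℂ)/4 = 0 := by linear_combination hs + (q - s/2 - 1/4)*hv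
    norm_num at this
  have hQ : q = (s^2+s+1)/(2*s+1) := by rw [eq_div_iff hv, hs]
  have hv' : s*2+1 ≠ 0 := by rwa [mul_comm] at hv
  have hfac : (q*y - s^2*(s+2)/(2*s+1)) * (q*y - (1-s)^2*(1+s)/(2*s+1)^2) = 0 := by
    rw [← hquad]
    generalize hz : q*y = z
    rw [hQ]; field_simp; ring
  rcases mul_eq_zero.mp hfac with h | h
  · refine key s hs hv ?_
    rw [sub_eq_zero.mp h]; field_simp
  · have hv2 : 2*((1-s)/(2*s+1))+1 = 3/(2*s+1) := by field_simp; ring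
    refine key ((1-s)/(2*s+1)) ?_ ?_ ?_
    · rw [hv2, hQ]; field_simp; ring
    · rw [hv2]; exact div_ne_zero (by norm_num) hv
    · rw [hv2, sub_eq_zero.mp h]; field_simp; ring

lemma aux_d1 (y : ℂ → ℂ) (t p : ℂ) (hy : HasDerivAt y p t) :
    HasDerivAt (fun t => t*(y t-1)^2*(y t-t)^2 - (t-1)*(y t)^2*(y t-t)^2 + t*(t-1)*(y t)^2*(y t-1)^2)
      (((((y t)-1)^2*((y t)-t)^2 + 2*(t*(((y t)-1)*p)*((y t)-t)^2) + 2*(t*((y t)-1)^2*(((y t)-t)*(p-1)))) - ((y t)^2*((y t)-t)^2 + 2*((t-1)*((y t)*p)*((y t)-t)^2) + 2*((t-1)*(y t)^2*(((y t)-t)*(p-1)))) + ((2*t-1)*(y t)^2*((y t)-1)^2 + 2*(t*(t-1)*((y t)*p)*((y t)-1)^2) + 2*(t*(t-1)*(y t)^2*(((y t)-1)*p))))) t := by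
  have hi := hasDerivAt_id' t
  have h1 := hy.sub_const 1
  have hyt := hy.sub hi
  have ht1 := hi.sub_const 1
  refine HasDerivAt.congr_deriv ((((hi.mul (h1.pow 2)).mul (hyt.pow 2)).sub ((ht1.mul (hy.pow 2)).mul (hyt.pow 2))).add
    (((hi.mul ht1).mul (hy.pow 2)).mul (h1.pow 2))) ?_
  simp; ring

lemma aux_d2 (y P : ℂ → ℂ) (t p r : ℂ) (hP : P t = p) (hy : HasDerivAt y p t) (hp : HasDerivAt P r t) :
    HasDerivAt (fun t => ((((y t)-1)^2*((y t)-t)^2 + 2*(t*(((y t)-1)*(P t))*((y t)-t)^2) + 2*(t*((y t)-1)^2*(((y t)-t)*((P t)-1)))) - ((y t)^2*((y t)-t)^2 + 2*((t-1)*((y t)*(P t))*((y t)-t)^2) + 2*((t-1)*(y t)^2*(((y t)-t)*((P t)-1)))) + ((2*t-1)*(y t)^2*((y t)-1)^2 + 2*(t*(t-1)*((y t)*(P t))*((y t)-1)^2) + 2*(t*(t-1)*(y t)^2*(((y t)-1)*(P t))))))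
      (((0*((y t)-1)^2*((y t)-t)^2+t*(2*(p)^2+2*((y t)-1)*r)*((y t)-t)^2+t*((y t)-1)^2*(2*(p-1)^2+2*((y t)-t)*r)+2*(1*(2*((y t)-1)*(p))*((y t)-t)^2+1*((y t)-1)^2*(2*((y t)-t)*(p-1))+t*(2*((y t)-1)*(p))*(2*((y t)-t)*(p-1)))) - (0*((y t))^2*((y t)-t)^2+(t-1)*(2*(p)^2+2*((y t))*r)*((y t)-t)^2+(t-1)*((y t))^2*(2*(p-1)^2+2*((y t)-t)*r)+2*(1*(2*((y t))*(p))*((y t)-t)^2+1*((y t))^2*(2*((y t)-t)*(p-1))+(t-1)*(2*((y t))*(p))*(2*((y t)-t)*(p-1)))) + (2*((y t))^2*((y t)-1)^2+(t*(t-1))*(2*(p)^2+2*((y t))*r)*((y t)-1)^2+(t*(t-1))*((y t))^2*(2*(p)^2+2*((y t)-1)*r)+2*((2*t-1)*(2*((y t))*(p))*((y t)-1)^2+(2*t-1)*((y t))^2*(2*((y t)-1)*(p))+(t*(t-1))*(2*((y t))*(p))*(2*((y t)-1)*(p)))))) t := by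
  subst hP
  have hi := hasDerivAt_id' t
  have h1 := hy.sub_const 1
  have hyt := hy.sub hi
  have ht1 := hi.sub_const 1
  have hp1 := hp.sub_const 1
  have a1 := (h1.pow 2).mul (hyt.pow 2)
  have a2 := ((hi.mul (h1.mul hp)).mul (hyt.pow 2)).const_mul 2
  have a3 := ((hi.mul (h1.pow 2)).mul (hyt.mul hp1)).const_mul 2
  have b1 := (hy.pow 2).mul (hyt.pow 2)
  have b2 := ((ht1.mul (hy.mul hp)).mul (hyt.pow 2)).const_mul 2
  have b3 := ((ht1.mul (hy.pow 2)).mul (hyt.mul hp1)).const_mul 2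
  have c1 := (((hi.const_mul 2).sub_const 1).mul (hy.pow 2)).mul (h1.pow 2)
  have c2 := (((hi.mul ht1).mul (hy.mul hp)).mul (h1.pow 2)).const_mul 2
  have c3 := (((hi.mul ht1).mul (hy.pow 2)).mul (h1.mul hp)).const_mul 2
  refine HasDerivAt.congr_deriv ((((a1.add a2).add a3).sub ((b1.add b2).add b3)).add ((c1.add c2).add c3)) ?_
  simp; ring

lemma aux_s1 (s p : ℂ) (hs0 : s ≠ 0) (hs1 : s - 1 ≠ 0) (hs2 : s + 2 ≠ 0) (hs3 : s + 1 ≠ 0)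
    (hv : 2*s+1 ≠ 0) (hw : s^2+s+1 ≠ 0) (t y : ℂ)
    (hY : y = s^2*(s+2)/(s^2+s+1)) (hT : t = s^3*(s+2)/(2*s+1))
    (h : (((y-1)^2*(y-t)^2 + 2*(t*((y-1)*p)*(y-t)^2) + 2*(t*(y-1)^2*((y-t)*(p-1)))) - (y^2*(y-t)^2 + 2*((t-1)*(y*p)*(y-t)^2) + 2*((t-1)*y^2*((y-t)*(p-1)))) + ((2*t-1)*y^2*(y-1)^2 + 2*(t*(t-1)*(y*p)*(y-1)^2) + 2*(t*(t-1)*y^2*((y-1)*p)))) = 0) : p = (s^2+s+4)*(2*s+1)^2/(6*s*(s+1)*(s^2+s+1)^2) := by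
  have hv' : s*2+1 ≠ 0 := by rwa [mul_comm] at hv
  have hw' : s*(s+1)+1 ≠ 0 := by convert hw using 1; ring
  have hB : (2*t*(y-1)*(y-t)^2+2*t*(y-1)^2*(y-t)-2*(t-1)*y*(y-t)^2-2*(t-1)*y^2*(y-t)+2*t*(t-1)*y*(y-1)^2+2*t*(t-1)*y^2*(y-1)) ≠ 0 := by
    have : (2*t*(y-1)*(y-t)^2+2*t*(y-1)^2*(y-t)-2*(t-1)*y*(y-t)^2-2*(t-1)*y^2*(y-t)+2*t*(t-1)*y*(y-1)^2+2*t*(t-1)*y^2*(y-1)) = 6*s^6*(s+2)^2*(s+1)^6*(s-1)^2/((s^2+s+1)^2*(2*s+1)^3) := by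
      rw [hY, hT]; field_simp; ring
    rw [this]
    exact div_ne_zero (by simp [*]) (by simp [*])
  apply mul_left_cancel₀ hB
  have h2 : ((2*t*(y-1)*(y-t)^2+2*t*(y-1)^2*(y-t)-2*(t-1)*y*(y-t)^2-2*(t-1)*y^2*(y-t)+2*t*(t-1)*y*(y-1)^2+2*t*(t-1)*y^2*(y-1))) * p = -((((y-1)^2*(y-t)^2 + 2*(t*((y-1)*0)*(y-t)^2) + 2*(t*(y-1)^2*((y-t)*(0-1)))) - (y^2*(y-t)^2 + 2*((t-1)*(y*0)*(y-t)^2) + 2*((t-1)*y^2*((y-t)*(0-1)))) + ((2*t-1)*y^2*(y-1)^2 + 2*(t*(t-1)*(y*0)*(y-1)^2) + 2*(t*(t-1)*y^2*((y-1)*0))))) := by linear_combination h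
  rw [h2, hY, hT]
  field_simp
  ring

lemma aux_s2 (s p r : ℂ) (hs0 : s ≠ 0) (hs1 : s - 1 ≠ 0) (hs2 : s + 2 ≠ 0) (hs3 : s + 1 ≠ 0)
    (hv : 2*s+1 ≠ 0) (hw : s^2+s+1 ≠ 0) (t y : ℂ)
    (hY : y = s^2*(s+2)/(s^2+s+1)) (hT : t = s^3*(s+2)/(2*s+1))
    (hp : p = (s^2+s+4)*(2*s+1)^2/(6*s*(s+1)*(s^2+s+1)^2))
    (h : ((0*(y-1)^2*(y-t)^2+t*(2*(p)^2+2*(y-1)*r)*(y-t)^2+t*(y-1)^2*(2*(p-1)^2+2*(y-t)*r)+2*(1*(2*(y-1)*(p))*(y-t)^2+1*(y-1)^2*(2*(y-t)*(p-1))+t*(2*(y-1)*(p))*(2*(y-t)*(p-1)))) - (0*(y)^2*(y-t)^2+(t-1)*(2*(p)^2+2*(y)*r)*(y-t)^2+(t-1)*(y)^2*(2*(p-1)^2+2*(y-t)*r)+2*(1*(2*(y)*(p))*(y-t)^2+1*(y)^2*(2*(y-t)*(p-1))+(t-1)*(2*(y)*(p))*(2*(y-t)*(p-1)))) + (2*(y)^2*(y-1)^2+(t*(t-1))*(2*(p)^2+2*(y)*r)*(y-1)^2+(t*(t-1))*(y)^2*(2*(p)^2+2*(y-1)*r)+2*((2*t-1)*(2*(y)*(p))*(y-1)^2+(2*t-1)*(y)^2*(2*(y-1)*(p))+(t*(t-1))*(2*(y)*(p))*(2*(y-1)*(p)))))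 = 0) : r = -(2*(s^2+s)^3+15*(s^2+s)^2+6*(s^2+s)+2)*(2*s+1)^3/(18*(s^2+s)^4*(s^2+s+1)^3) := by
  have hv' : s*2+1 ≠ 0 := by rwa [mul_comm] at hv
  have hw' : s*(s+1)+1 ≠ 0 := by convert hw using 1; ring
  have hu : s^2+s ≠ 0 := by
    have : s^2+s = s*(s+1) := by ring
    rw [this]; exact mul_ne_zero hs0 hs3
  have hB : (2*t*(y-1)*(y-t)^2+2*t*(y-1)^2*(y-t)-2*(t-1)*y*(y-t)^2-2*(t-1)*y^2*(y-t)+2*t*(t-1)*y*(y-1)^2+2*t*(t-1)*y^2*(y-1)) ≠ 0 := by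
    have : (2*t*(y-1)*(y-t)^2+2*t*(y-1)^2*(y-t)-2*(t-1)*y*(y-t)^2-2*(t-1)*y^2*(y-t)+2*t*(t-1)*y*(y-1)^2+2*t*(t-1)*y^2*(y-1)) = 6*s^6*(s+2)^2*(s+1)^6*(s-1)^2/((s^2+s+1)^2*(2*s+1)^3) := by
      rw [hY, hT]; field_simp; ring
    rw [this]
    exact div_ne_zero (by simp [*]) (by simp [*])
  apply mul_left_cancel₀ hB
  have h2 : ((2*t*(y-1)*(y-t)^2+2*t*(y-1)^2*(y-t)-2*(t-1)*y*(y-t)^2-2*(t-1)*y^2*(y-t)+2*t*(t-1)*y*(y-1)^2+2*t*(t-1)*y^2*(y-1))) * r = -(((0*(y-1)^2*(y-t)^2+t*(2*(p)^2+2*(y-1)*0)*(y-t)^2+t*(y-1)^2*(2*(p-1)^2+2*(y-t)*0)+2*(1*(2*(y-1)*(p))*(y-t)^2+1*(y-1)^2*(2*(y-t)*(p-1))+t*(2*(y-1)*(p))*(2*(y-t)*(p-1)))) - (0*(y)^2*(y-t)^2+(t-1)*(2*(p)^2+2*(y)*0)*(y-t)^2+(t-1)*(y)^2*(2*(p-1)^2+2*(y-t)*0)+2*(1*(2*(y)*(p))*(y-t)^2+1*(y)^2*(2*(y-t)*(p-1))+(t-1)*(2*(y)*(p))*(2*(y-t)*(p-1))))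 + (2*(y)^2*(y-1)^2+(t*(t-1))*(2*(p)^2+2*(y)*0)*(y-1)^2+(t*(t-1))*(y)^2*(2*(p)^2+2*(y-1)*0)+2*((2*t-1)*(2*(y)*(p))*(y-1)^2+(2*t-1)*(y)^2*(2*(y-1)*(p))+(t*(t-1))*(2*(y)*(p))*(2*(y-1)*(p)))))) := by linear_combination h
  have hu' : s^2+s = s*(s+1) := by ring
  rw [h2, hY, hT, hp, hu']
  field_simp
  ring


/-- A solution of the stated algebraic equation solves the sixth Painlevé equation
with the indicated θ-tuple. -/
theorem stmt_2 (θ : ℂ) (U : Set ℂ) (hUopen : IsOpen U)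
    (hU : ∀ t ∈ U, t ≠ 0 ∧ t ≠ 1)
    (y : ℂ → ℂ)
    (hdiff : ∀ t ∈ U, DifferentiableAt ℂ y t ∧ DifferentiableAt ℂ (deriv y) t)
    (hreg : ∀ t ∈ U, y t ≠ 0 ∧ y t ≠ 1 ∧ y t ≠ t)
    (halg : ∀ t ∈ U, t / (y t)^2 - (t-1) / (y t - 1)^2 + t*(t-1) / (y t - t)^2 = 0)
    (hnd : ∀ t ∈ U, -2*t / (y t)^3 + 2*(t-1) / (y t - 1)^3 - 2*t*(t-1) / (y t - t)^3 ≠ 0)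
    :
    ∀ t ∈ U,
      deriv (deriv y) t =
        (1/2) * (1/(y t) + 1/(y t - 1) + 1/(y t - t)) * (deriv y t)^2
        - (1/t + 1/(t-1) + 1/(y t - t)) * (deriv y t)
        + (y t * (y t - 1) * (y t - t) / (t^2 * (t-1)^2)) *
          ((1/8 : ℂ) + (-(θ^2)/2) * t / (y t)^2
            + (θ^2/2) * (t-1) / (y t - 1)^2
            + ((1-θ^2)/2) * t * (t-1) / (y t - t)^2) := by
  have hP : ∀ t ∈ U, t*(y t-1)^2*(y t-t)^2 - (t-1)*(y t)^2*(y t-t)^2 + t*(t-1)*(y t)^2*(y t-1)^2 = 0 := by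
    intro t ht
    obtain ⟨h0, h1, h2⟩ := hreg t ht
    have h1' := sub_ne_zero.mpr h1
    have h2' := sub_ne_zero.mpr h2
    have e : t*(y t-1)^2*(y t-t)^2 - (t-1)*(y t)^2*(y t-t)^2 + t*(t-1)*(y t)^2*(y t-1)^2 =
      (y t)^2*(y t-1)^2*(y t-t)^2*(t / (y t)^2 - (t-1) / (y t - 1)^2 + t*(t-1) / (y t - t)^2) := by
      field_simp
    rw [e, halg t ht, mul_zero]
  have zero : ∀ (f : ℂ → ℂ), (∀ t ∈ U, f t = 0) → ∀ t ∈ U, ∀ d, HasDerivAt f d t → d = 0 := by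
    intro f hf t ht d hd
    have : f =ᶠ[nhds t] fun _ => 0 := by
      filter_upwards [hUopen.mem_nhds ht] with x hx using hf x hx
    exact hd.unique ((hasDerivAt_const t (0:ℂ)).congr_of_eventuallyEq this)
  have hP1 := fun t ht => zero _ hP t ht _ (aux_d1 y t (deriv y t) (hdiff t ht).1.hasDerivAt)
  have hP2 := fun t ht => zero _ hP1 t ht _ (aux_d2 y (deriv y) t _ _ rfl
    (hdiff t ht).1.hasDerivAt (hdiff t ht).2.hasDerivAt)
  intro t ht
  obtain ⟨h0, h1, h2⟩ := hreg t ht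
  obtain ⟨ht0, ht1⟩ := hU t ht
  obtain ⟨s, hv, hw, hY, hT⟩ := aux_param t (y t) h0 h1 h2 (hP t ht)
  have hv' : s*2+1 ≠ 0 := by rwa [mul_comm] at hv
  have hw' : s*(s+1)+1 ≠ 0 := by convert hw using 1; ring
  have hs0 : s ≠ 0 := by rintro rfl; apply h0; rw [hY]; simp
  have hs2 : s + 2 ≠ 0 := by intro h; apply h0; rw [hY, h]; simp
  have hy1 : y t - 1 = (s+1)^2*(s-1)/(s^2+s+1) := by rw [hY]; field_simp; ring
  have hs1 : s - 1 ≠ 0 := by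
    intro h; apply h1; rw [← sub_eq_zero, hy1, h]; simp
  have hs3 : s + 1 ≠ 0 := by
    intro h; apply h1; rw [← sub_eq_zero, hy1, h]; simp
  have hp := aux_s1 s _ hs0 hs1 hs2 hs3 hv hw t (y t) hY hT (hP1 t ht)
  have hr := aux_s2 s _ _ hs0 hs1 hs2 hs3 hv hw t (y t) hY hT hp (hP2 t ht)
  have hyt : y t - t = -(s^2*(s+2)*(s+1)^2*(s-1))/((s^2+s+1)*(2*s+1)) := by
    rw [hY, hT]; field_simp; ring
  have ht1' : t - 1 = (s-1)*(s+1)^3/(2*s+1) := by rw [hT]; field_simp; ring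
  have hθ : ((1/8 : ℂ) + (-(θ^2)/2) * t / (y t)^2 + (θ^2/2) * (t-1) / (y t - 1)^2
            + ((1-θ^2)/2) * t * (t-1) / (y t - t)^2) = 1/8 + (1/2)*(t*(t-1)/(y t - t)^2) := by
    linear_combination (-(θ^2)/2) * halg t ht
  rw [hθ, hr, hp, hy1, hyt, ht1', hY, hT]
  have hu' : s^2+s = s*(s+1) := by ring
  field_simp
  ring
end

section
/- Fix θ, θ' ∈ ℂ. Let U ⊆ ℂ \ {0, 1} be open and let y : U → ℂ be twice complex differentiable with y(t) ∉ {0, 1, t} for all t ∈ U. Suppose y satisfies (y(t) − 1)² = 1 − t identically on U. Then y solves the sixth Painlevé equation PVI(α,β,γ,δ) on U with θ-tuple (θ₀, θ₁, θ_t, θ_∞) = (θ, θ', θ, θ'+1), i.e. with α = θ'²/2, β = −θ²/2, γ = θ'²/2, δ = (1 − θ²)/2. -/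
/-- A solution of the stated algebraic equation solves the sixth Painlevé equation
with the indicated θ-tuple. -/
theorem stmt_5 (θ θ' : ℂ) (U : Set ℂ) (hUopen : IsOpen U)
    (hU : ∀ t ∈ U, t ≠ 0 ∧ t ≠ 1)
    (y : ℂ → ℂ)
    (hdiff : ∀ t ∈ U, DifferentiableAt ℂ y t ∧ DifferentiableAt ℂ (deriv y) t)
    (hreg : ∀ t ∈ U, y t ≠ 0 ∧ y t ≠ 1 ∧ y t ≠ t)
    (halg : ∀ t ∈ U, (y t - 1)^2 = 1 - t)
    :
    ∀ t ∈ U,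
      deriv (deriv y) t =
        (1/2) * (1/(y t) + 1/(y t - 1) + 1/(y t - t)) * (deriv y t)^2
        - (1/t + 1/(t-1) + 1/(y t - t)) * (deriv y t)
        + (y t * (y t - 1) * (y t - t) / (t^2 * (t-1)^2)) *
          ((θ'^2/2) + (-(θ^2)/2) * t / (y t)^2
            + (θ'^2/2) * (t-1) / (y t - 1)^2
            + ((1-θ^2)/2) * t * (t-1) / (y t - t)^2) := by
  have h1 : ∀ t ∈ U, 2 * (y t - 1) * deriv y t = -1 := by
    intro t ht
    have hd := (hdiff t ht).1.hasDerivAt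
    have ha : HasDerivAt (fun s => (y s - 1)^2) (2 * (y t - 1) * deriv y t) t := by
      have := (hd.sub_const 1).fun_pow 2
      simpa using this
    have hb : HasDerivAt (fun s : ℂ => 1 - s) (-1) t := by
      simpa using (hasDerivAt_id t).const_sub 1
    have he : (fun s => (y s - 1)^2) =ᶠ[nhds t] (fun s : ℂ => 1 - s) := by
      filter_upwards [hUopen.mem_nhds ht] with s hs using halg s hs
    exact (ha.congr_of_eventuallyEq he.symm).unique hb
  intro t ht
  have h2 : 2 * deriv y t * deriv y t + 2 * (y t - 1) * deriv (deriv y) t = 0 := by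
    have hd := (hdiff t ht).1.hasDerivAt
    have hd2 := (hdiff t ht).2.hasDerivAt
    have ha := ((hd.sub_const 1).const_mul 2).fun_mul hd2
    have he : (fun s => 2 * (y s - 1) * deriv y s) =ᶠ[nhds t] (fun _ : ℂ => -1) := by
      filter_upwards [hUopen.mem_nhds ht] with s hs using h1 s hs
    exact (ha.congr_of_eventuallyEq he.symm).unique (hasDerivAt_const t (-1))
  have h1t := h1 t ht
  obtain ⟨t0, t1⟩ := hU t ht
  obtain ⟨y0, y1, yt⟩ := hreg t ht
  have ha := halg t ht
  generalize deriv (deriv y) t = c at *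
  generalize deriv y t = b at *
  generalize y t = a at *
  clear h1 halg hreg hdiff hU
  obtain ⟨w, rfl⟩ : ∃ w, a = 1 + w := ⟨a - 1, by ring⟩
  have hw : w ≠ 0 := fun h => y1 (by rw [h]; ring)
  obtain rfl : t = 1 - w^2 := by linear_combination ha
  have hm : 1 - w ≠ 0 := fun h => t0 (by linear_combination (1 + w) * h)
  have hb : b = -1 / (2 * w) := by
    field_simp
    linear_combination h1t
  subst hb
  have hc : c = -1 / (4 * w^3) := by
    field_simp at h2 ⊢
    linear_combination h2
  subst hc
  have e1 : 1 + w - 1 = w := by ring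
  have e2 : 1 + w - (1 - w^2) = w * (1 + w) := by ring
  have e3 : 1 - w^2 - 1 = -w^2 := by ring
  have e4 : 1 - w^2 = (1 - w) * (1 + w) := by ring
  rw [e2, e3, e1, e4]
  field_simp
  ring
end

section
/- Define the rational functions of s ∈ ℂ: t(s) = (s+1)²(s+3)²(s²−2s+3)/(2(s²+3)³) and y(s) = (s+1)(s+3)(s²−2s+3)(s²+6s+3)/(2(s²+1)(s²+3)(s²+9)). Then for every s ∈ ℂ such that s²+3 ≠ 0, s²+1 ≠ 0, s²+9 ≠ 0, t'(s) ≠ 0, t(s) ∉ {0,1}, and y(s) ∉ {0, 1, t(s)}, the pair (t, y) is a parametric solution of the sixth Painlevé equation PVI(α,β,γ,δ) at s with θ-tuple (θ₀, θ₁, θ_t, θ_∞) = (2/3, 2/3, 1/3, 1/3), i.e. α = 2/9, β = −2/9, γ = 2/9, δ = 4/9. -/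
noncomputable def tFun7 : ℂ → ℂ := fun s => (s+1)^2*(s+3)^2*(s^2-2*s+3)/(2*(s^2+3)^3)

noncomputable def yFun7 : ℂ → ℂ := fun s => (s+1)*(s+3)*(s^2-2*s+3)*(s^2+6*s+3)/(2*(s^2+1)*(s^2+3)*(s^2+9))

lemma tDer7 (s : ℂ) (h1 : s^2+3 ≠ 0) :
    deriv tFun7 s = -3*((s-1)*(s+1)*(s-3)*(s+3)*(s^2-3))/(s^2+3)^4 := by
  have hid : HasDerivAt (fun u : ℂ => u) 1 s := hasDerivAt_id s
  have hn := (((hid.add_const 1).pow 2).mul ((hid.add_const 3).pow 2)).mul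
    (((hid.pow 2).sub (hid.const_mul 2)).add_const 3)
  have hd := (((hid.pow 2).add_const 3).pow 3).const_mul 2
  have h0 : (2*(s^2+3)^3) ≠ 0 := by simp [h1]
  have h := (hn.div hd h0).deriv
  refine Eq.trans h ?_
  simp only [Pi.mul_apply, Pi.pow_apply, Pi.add_apply, Pi.sub_apply]
  push_cast
  field_simp
  ring

lemma yDer7 (s : ℂ) (h1 : s^2+3 ≠ 0) (h2 : s^2+1 ≠ 0) (h3 : s^2+9 ≠ 0) :
    deriv yFun7 s = -4*((s^2-3)*(s^8-10*s^6-102*s^4-90*s^2+81))/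
      ((s^2+1)^2*(s^2+3)^2*(s^2+9)^2) := by
  have hid : HasDerivAt (fun u : ℂ => u) 1 s := hasDerivAt_id s
  have hn := (((hid.add_const 1).mul (hid.add_const 3)).mul
    (((hid.pow 2).sub (hid.const_mul 2)).add_const 3)).mul
    (((hid.pow 2).add (hid.const_mul 6)).add_const 3)
  have hd := ((((hid.pow 2).add_const 1).const_mul 2).mul ((hid.pow 2).add_const 3)).mul
    ((hid.pow 2).add_const 9)
  have h0 : (2*(s^2+1)*(s^2+3)*(s^2+9)) ≠ 0 := by simp [h1, h2, h3]
  have h := (hn.div hd h0).deriv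
  refine Eq.trans h ?_
  simp only [Pi.mul_apply, Pi.pow_apply, Pi.add_apply, Pi.sub_apply]
  push_cast
  field_simp
  ring

lemma pDer7 (s : ℂ) (ha : s-1 ≠ 0) (hb : s+1 ≠ 0) (hc : s-3 ≠ 0) (hd : s+3 ≠ 0)
    (h2 : s^2+1 ≠ 0) (h3 : s^2+9 ≠ 0) :
    deriv (fun u : ℂ => (4*((u^8-10*u^6-102*u^4-90*u^2+81)*(u^2+3)^2))/
      (3*((u^2-1)*(u^2-9)*((u^2+1)^2*(u^2+9)^2)))) s
    = (4/3)*(((8*s^7-60*s^5-408*s^3-180*s)*(s^2+3)^2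
        + (s^8-10*s^6-102*s^4-90*s^2+81)*(4*s*(s^2+3)))
          /((s-1)*(s+1)*(s-3)*(s+3)*(s^2+1)^2*(s^2+9)^2)
       - (s^8-10*s^6-102*s^4-90*s^2+81)*(s^2+3)^2
         *(2*s*(s^2-9)*(s^2+1)*(s^2+9)+2*s*(s^2-1)*(s^2+1)*(s^2+9)
           +4*s*(s^2-1)*(s^2-9)*(s^2+9)+4*s*(s^2-1)*(s^2-9)*(s^2+1))
         /((s-1)^2*(s+1)^2*(s-3)^2*(s+3)^2*(s^2+1)^3*(s^2+9)^3)) := by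
  have e1 : s^2-1 = (s-1)*(s+1) := by ring
  have e9 : s^2-9 = (s-3)*(s+3) := by ring
  have hid : HasDerivAt (fun u : ℂ => u) 1 s := hasDerivAt_id s
  have hn := (((((((hid.pow 8).sub ((hid.pow 6).const_mul 10)).sub
    ((hid.pow 4).const_mul 102)).sub ((hid.pow 2).const_mul 90)).add_const 81)).mul
    (((hid.pow 2).add_const 3).pow 2)).const_mul 4
  have hdd := ((((hid.pow 2).sub_const 1).mul ((hid.pow 2).sub_const 9)).mul
    ((((hid.pow 2).add_const 1).pow 2).mul (((hid.pow 2).add_const 9).pow 2))).const_mul 3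
  have h0 : (3*((s^2-1)*(s^2-9)*((s^2+1)^2*(s^2+9)^2))) ≠ 0 := by
    rw [e1, e9]; simp [ha, hb, hc, hd, h2, h3]
  have h := (hn.div hdd h0).deriv
  refine Eq.trans h ?_
  simp only [Pi.mul_apply, Pi.pow_apply, Pi.add_apply, Pi.sub_apply]
  push_cast
  simp only [e1, e9]
  field_simp
  ring

set_option maxHeartbeats 4000000 in
/-- Parametric algebraic solution of the sixth Painlevé equation. -/
theorem stmt_7 (s : ℂ)
    (h1 : s^2+3 ≠ 0)
    (h2 : s^2+1 ≠ 0)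
    (h3 : s^2+9 ≠ 0)
    (hdt : deriv tFun7 s ≠ 0)
    (ht0 : tFun7 s ≠ 0) (ht1 : tFun7 s ≠ 1)
    (hy0 : yFun7 s ≠ 0) (hy1 : yFun7 s ≠ 1) (hyt : yFun7 s ≠ tFun7 s) :
    deriv (fun u => deriv yFun7 u / deriv tFun7 u) s / deriv tFun7 s =
      (1/2) * (1/(yFun7 s) + 1/(yFun7 s - 1) + 1/(yFun7 s - tFun7 s)) *
          (deriv yFun7 s / deriv tFun7 s)^2
        - (1/(tFun7 s) + 1/(tFun7 s - 1) + 1/(yFun7 s - tFun7 s)) *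
          (deriv yFun7 s / deriv tFun7 s)
        + (yFun7 s * (yFun7 s - 1) * (yFun7 s - tFun7 s) /
            ((tFun7 s)^2 * (tFun7 s - 1)^2)) *
          ((2/9 : ℂ) + (-2/9 : ℂ) * tFun7 s / (yFun7 s)^2
            + (2/9 : ℂ) * (tFun7 s - 1) / (yFun7 s - 1)^2
            + (4/9 : ℂ) * tFun7 s * (tFun7 s - 1) / (yFun7 s - tFun7 s)^2) := by
  have hdt' := hdt
  rw [tDer7 s h1] at hdt'
  have ha : s-1 ≠ 0 := by rintro h; apply hdt'; rw [h]; simp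
  have hb : s+1 ≠ 0 := by rintro h; apply hdt'; rw [h]; simp
  have hc : s-3 ≠ 0 := by rintro h; apply hdt'; rw [h]; simp
  have hd : s+3 ≠ 0 := by rintro h; apply hdt'; rw [h]; simp
  have he : s^2-3 ≠ 0 := by rintro h; apply hdt'; rw [h]; simp
  have hp : ∀ u : ℂ, u^2+3 ≠ 0 → u^2+1 ≠ 0 → u^2+9 ≠ 0 → u-1 ≠ 0 → u+1 ≠ 0 → u-3 ≠ 0 →
      u+3 ≠ 0 → u^2-3 ≠ 0 → deriv yFun7 u / deriv tFun7 u =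
      (4*((u^8-10*u^6-102*u^4-90*u^2+81)*(u^2+3)^2))/
      (3*((u^2-1)*(u^2-9)*((u^2+1)^2*(u^2+9)^2))) := by
    intro u k1 k2 k3 k4 k5 k6 k7 k8
    rw [tDer7 u k1, yDer7 u k1 k2 k3, show u^2-1 = (u-1)*(u+1) by ring,
      show u^2-9 = (u-3)*(u+3) by ring]
    rw [div_div_div_eq, div_eq_div_iff (by simp [k1, k2, k3, k4, k5, k6, k7, k8])
      (by simp [k1, k2, k3, k4, k5, k6, k7, k8])]
    ring
  have hev : (fun u => deriv yFun7 u / deriv tFun7 u) =ᶠ[nhds s] fun u : ℂ =>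
      (4*((u^8-10*u^6-102*u^4-90*u^2+81)*(u^2+3)^2))/
      (3*((u^2-1)*(u^2-9)*((u^2+1)^2*(u^2+9)^2))) := by
    have ev : ∀ f : ℂ → ℂ, Continuous f → f s ≠ 0 → ∀ᶠ u in nhds s, f u ≠ 0 :=
      fun f hf h => hf.continuousAt.eventually_ne h
    filter_upwards [ev (fun u => u^2+3) (by fun_prop) h1, ev (fun u => u^2+1) (by fun_prop) h2,
      ev (fun u => u^2+9) (by fun_prop) h3, ev (fun u => u-1) (by fun_prop) ha,
      ev (fun u => u+1) (by fun_prop) hb, ev (fun u => u-3) (by fun_prop) hc,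
      ev (fun u => u+3) (by fun_prop) hd, ev (fun u => u^2-3) (by fun_prop) he]
      with u k1 k2 k3 k4 k5 k6 k7 k8
    exact hp u k1 k2 k3 k4 k5 k6 k7 k8
  rw [hev.deriv_eq, pDer7 s ha hb hc hd h2 h3, hp s h1 h2 h3 ha hb hc hd he, tDer7 s h1]
  have et : tFun7 s = (s+1)^2*(s+3)^2*(s^2-2*s+3)/(2*(s^2+3)^3) := rfl
  have ey : yFun7 s = (s+1)*(s+3)*(s^2-2*s+3)*(s^2+6*s+3)/(2*(s^2+1)*(s^2+3)*(s^2+9)) := rfl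
  have et1 : tFun7 s - 1 = -((s-1)^2*(s-3)^2*(s^2+2*s+3))/(2*(s^2+3)^3) := by
    rw [et]; field_simp; ring
  have ey1 : yFun7 s - 1 = -((s-1)*(s-3)*(s^2+2*s+3)*(s^2-6*s+3))/
      (2*(s^2+1)*(s^2+3)*(s^2+9)) := by
    rw [ey]; field_simp; ring
  have eyt : yFun7 s - tFun7 s = s*((s-1)*(s+1)*(s-3)*(s+3)*(s^2-2*s+3)*(s^2+2*s+3))/
      ((s^2+1)*(s^2+3)^3*(s^2+9)) := by
    rw [et, ey]; field_simp; ring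
  have hyt' := sub_ne_zero.2 hyt
  have hy1' := sub_ne_zero.2 hy1
  rw [eyt] at hyt'
  rw [ey1] at hy1'
  have hy0' := hy0
  rw [ey] at hy0'
  have k0 : s ≠ 0 := by rintro h; apply hyt'; rw [h]; simp
  have k1 : s^2-2*s+3 ≠ 0 := by rintro h; apply hyt'; rw [h]; simp
  have k2 : s^2+2*s+3 ≠ 0 := by rintro h; apply hyt'; rw [h]; simp
  have k3 : s^2-6*s+3 ≠ 0 := by rintro h; apply hy1'; rw [h]; simp
  have k4 : s^2+6*s+3 ≠ 0 := by rintro h; apply hy0'; rw [h]; simp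
  rw [et1, ey1, eyt, et, ey]
  clear et ey et1 ey1 eyt hyt' hy1' hy0' hev hp hdt' hdt ht0 ht1 hy0 hy1 hyt
  rw [show s^2-1 = (s-1)*(s+1) by ring, show s^2-9 = (s-3)*(s+3) by ring]
  have k1' : s*(s-2)+3 ≠ 0 := by convert k1 using 1; ring
  have k2' : s*(s+2)+3 ≠ 0 := by convert k2 using 1; ring
  have k3' : s*(s-6)+3 ≠ 0 := by convert k3 using 1; ring
  have k4' : s*(s+6)+3 ≠ 0 := by convert k4 using 1; ring
  field_simp
  ring
end

section
/- Define the rational functions of s ∈ ℂ: t(s) = (s−1)²(s−3)²(s²+2s+3)/(2(s²+3)³) and y(s) = (s−1)(s−3)(s²+6s+3)/(4s(s²+3)). Then for every s ∈ ℂ such that s ≠ 0, s²+3 ≠ 0, t'(s) ≠ 0, t(s) ∉ {0,1}, and y(s) ∉ {0, 1, t(s)}, the pair (t, y) is a parametric solution of the sixth Painlevé equation PVI(α,β,γ,δ) at s with θ-tuple (θ₀, θ₁, θ_t, θ_∞) = (2/3, 2/3, 2/3, 2/3), i.e. α = 1/18, β = −2/9, γ = 2/9, δ = 5/18. -/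
noncomputable def tFun8 : ℂ → ℂ := fun s => (s-1)^2*(s-3)^2*(s^2+2*s+3)/(2*(s^2+3)^3)

noncomputable def yFun8 : ℂ → ℂ := fun s => (s-1)*(s-3)*(s^2+6*s+3)/(4*s*(s^2+3))

lemma t8_deriv (s : ℂ) (h2 : s^2+3 ≠ 0) :
    deriv tFun8 s = 3*(s-1)*(s-3)*(s+1)*(s+3)*(s^2-3)/(s^2+3)^4 := by
  have hn : HasDerivAt (fun s : ℂ => (s-1)^2*(s-3)^2*(s^2+2*s+3))
      ((2*(s-1)*(s-3)^2+(s-1)^2*(2*(s-3)))*(s^2+2*s+3) + (s-1)^2*(s-3)^2*(2*s+2)) s := by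
    have a := ((((hasDerivAt_id s).sub_const 1).pow 2).mul
      (((hasDerivAt_id s).sub_const 3).pow 2)).mul
      ((((hasDerivAt_id s).pow 2).add ((hasDerivAt_id s).const_mul 2)).add_const 3)
    refine (a.congr_deriv ?_)
    simp
    try ring
  have hd : HasDerivAt (fun s : ℂ => 2*(s^2+3)^3) (12*s*(s^2+3)^2) s := by
    have a := ((((hasDerivAt_id s).pow 2).add_const 3).pow 3).const_mul 2
    refine (a.congr_deriv ?_)
    simp
    try ring
  have h := hn.div hd (by simp [h2])
  refine (h.deriv).trans ?_
  field_simp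
  ring

lemma y8_deriv (s : ℂ) (h1 : s ≠ 0) (h2 : s^2+3 ≠ 0) :
    deriv yFun8 s = (s^2-3)*(s^4+30*s^2+9)/(4*s^2*(s^2+3)^2) := by
  have hn : HasDerivAt (fun s : ℂ => (s-1)*(s-3)*(s^2+6*s+3))
      (4*s^3+6*s^2-36*s+6) s := by
    have a := (((hasDerivAt_id s).sub_const 1).mul ((hasDerivAt_id s).sub_const 3)).mul
      ((((hasDerivAt_id s).pow 2).add ((hasDerivAt_id s).const_mul 6)).add_const 3)
    refine (a.congr_deriv ?_)
    simp
    try ring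
  have hd : HasDerivAt (fun s : ℂ => 4*s*(s^2+3)) (12*s^2+12) s := by
    have a := ((hasDerivAt_id s).const_mul 4).mul (((hasDerivAt_id s).pow 2).add_const 3)
    refine (a.congr_deriv ?_)
    simp
    try ring
  have h := hn.div hd (by simp [h1, h2])
  refine (h.deriv).trans ?_
  field_simp
  ring

lemma p8_deriv (s : ℂ) (h1 : s ≠ 0) (h2 : s^2+3 ≠ 0) (h3 : s^2-3 ≠ 0)
    (ha : s-1 ≠ 0) (hb : s-3 ≠ 0) (hc : s+1 ≠ 0) (hd : s+3 ≠ 0) :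
    deriv (fun u => deriv yFun8 u / deriv tFun8 u) s =
      (((4*s^3+60*s)*(s^2+3)^2+(s^4+30*s^2+9)*(4*s*(s^2+3)))
          *(12*s^2*((s-1)*(s-3)*(s+1)*(s+3)))
        - (s^4+30*s^2+9)*(s^2+3)^2*(72*s^5-480*s^3+216*s))
        / (12*s^2*((s-1)*(s-3)*(s+1)*(s+3)))^2 := by
  have e : (fun u => deriv yFun8 u / deriv tFun8 u) =ᶠ[nhds s]
      fun u => ((u^4+30*u^2+9)*(u^2+3)^2)/(12*u^6-120*u^4+108*u^2) := by
    have c1 : ∀ᶠ u : ℂ in nhds s, u ≠ 0 := continuousAt_id.eventually_ne h1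
    have c2 : ∀ᶠ u : ℂ in nhds s, u^2+3 ≠ 0 :=
      ContinuousAt.eventually_ne (g := fun u : ℂ => u^2+3) (by fun_prop) h2
    have c3 : ∀ᶠ u : ℂ in nhds s, u^2-3 ≠ 0 :=
      ContinuousAt.eventually_ne (g := fun u : ℂ => u^2-3) (by fun_prop) h3
    have c4 : ∀ᶠ u : ℂ in nhds s, (u-1)*(u-3)*(u+1)*(u+3) ≠ 0 :=
      ContinuousAt.eventually_ne (g := fun u : ℂ => (u-1)*(u-3)*(u+1)*(u+3)) (by fun_prop)
        (by simp [ha, hb, hc, hd])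
    filter_upwards [c1, c2, c3, c4] with u k1 k2 k3 k4
    simp only [mul_ne_zero_iff] at k4
    obtain ⟨⟨⟨k4, k5⟩, k6⟩, k7⟩ := k4
    rw [y8_deriv u k1 k2, t8_deriv u k2,
      show 12*u^6-120*u^4+108*u^2 = 12*u^2*((u-1)*(u-3)*(u+1)*(u+3)) by ring]
    field_simp
    try ring
  rw [e.deriv_eq]
  have hn : HasDerivAt (fun u : ℂ => (u^4+30*u^2+9)*(u^2+3)^2)
      ((4*s^3+60*s)*(s^2+3)^2+(s^4+30*s^2+9)*(4*s*(s^2+3))) s := by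
    have a := ((((hasDerivAt_id s).pow 4).add (((hasDerivAt_id s).pow 2).const_mul 30)).add_const
      9).mul ((((hasDerivAt_id s).pow 2).add_const 3).pow 2)
    refine (a.congr_deriv ?_)
    simp
    try ring
  have hd' : HasDerivAt (fun u : ℂ => 12*u^6-120*u^4+108*u^2) (72*s^5-480*s^3+216*s) s := by
    have a := ((((hasDerivAt_id s).pow 6).const_mul 12).sub
      (((hasDerivAt_id s).pow 4).const_mul 120)).add (((hasDerivAt_id s).pow 2).const_mul 108)
    refine (a.congr_deriv ?_)
    simp
    try ring
  have f : 12*s^6-120*s^4+108*s^2 = 12*s^2*((s-1)*(s-3)*(s+1)*(s+3)) := by ring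
  have h := hn.div hd' (by rw [f]; simp [h1, ha, hb, hc, hd])
  refine (h.deriv).trans ?_
  simp only [f]

set_option maxRecDepth 100000 in
set_option maxHeartbeats 4000000 in
/-- Parametric algebraic solution of the sixth Painlevé equation. -/
theorem stmt_8 (s : ℂ)
    (h1 : s ≠ 0)
    (h2 : s^2+3 ≠ 0)
    (hdt : deriv tFun8 s ≠ 0)
    (ht0 : tFun8 s ≠ 0) (ht1 : tFun8 s ≠ 1)
    (hy0 : yFun8 s ≠ 0) (hy1 : yFun8 s ≠ 1) (hyt : yFun8 s ≠ tFun8 s) :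
    deriv (fun u => deriv yFun8 u / deriv tFun8 u) s / deriv tFun8 s =
      (1/2) * (1/(yFun8 s) + 1/(yFun8 s - 1) + 1/(yFun8 s - tFun8 s)) *
          (deriv yFun8 s / deriv tFun8 s)^2
        - (1/(tFun8 s) + 1/(tFun8 s - 1) + 1/(yFun8 s - tFun8 s)) *
          (deriv yFun8 s / deriv tFun8 s)
        + (yFun8 s * (yFun8 s - 1) * (yFun8 s - tFun8 s) /
            ((tFun8 s)^2 * (tFun8 s - 1)^2)) *
          ((1/18 : ℂ) + (-2/9 : ℂ) * tFun8 s / (yFun8 s)^2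
            + (2/9 : ℂ) * (tFun8 s - 1) / (yFun8 s - 1)^2
            + (5/18 : ℂ) * tFun8 s * (tFun8 s - 1) / (yFun8 s - tFun8 s)^2) := by
  have et : tFun8 s = (s-1)^2*(s-3)^2*(s^2+2*s+3)/(2*(s^2+3)^3) := rfl
  have ey : yFun8 s = (s-1)*(s-3)*(s^2+6*s+3)/(4*s*(s^2+3)) := rfl
  have et1 : tFun8 s - 1 = -((s+1)^2*(s+3)^2*(s^2-2*s+3))/(2*(s^2+3)^3) := by
    rw [et]; field_simp; ring
  have ey1 : yFun8 s - 1 = (s+1)*(s+3)*(s^2-6*s+3)/(4*s*(s^2+3)) := by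
    rw [ey]; field_simp; ring
  have eyt : yFun8 s - tFun8 s =
      (s-1)*(s-3)*(s+1)*(s+3)*(s^2+1)*(s^2+9)/(4*s*(s^2+3)^3) := by
    rw [ey, et]; field_simp; ring
  have ht1' := sub_ne_zero.mpr ht1
  have hy1' := sub_ne_zero.mpr hy1
  have hyt' := sub_ne_zero.mpr hyt
  rw [t8_deriv s h2] at hdt
  rw [et1] at ht1'
  rw [ey1] at hy1'
  rw [eyt] at hyt'
  rw [et] at ht0
  rw [ey] at hy0
  simp only [div_ne_zero_iff, mul_ne_zero_iff, neg_ne_zero] at hdt ht1' hy1' hyt' ht0 hy0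
  obtain ⟨⟨⟨⟨⟨⟨-, ha⟩, hb⟩, hc⟩, hd⟩, h3⟩, -⟩ := hdt
  have hq : s^2+2*s+3 ≠ 0 := ht0.1.2
  have hq' : s^2-2*s+3 ≠ 0 := ht1'.1.2
  have hr : s^2+6*s+3 ≠ 0 := hy0.1.2
  have hr' : s^2-6*s+3 ≠ 0 := hy1'.1.2
  have hm : s^2+1 ≠ 0 := hyt'.1.1.2
  have hm' : s^2+9 ≠ 0 := hyt'.1.2
  rw [p8_deriv s h1 h2 h3 ha hb hc hd, y8_deriv s h1 h2, t8_deriv s h2, et1, ey1, eyt, et, ey]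
  clear et ey et1 ey1 eyt ht0 ht1 hy0 hy1 hyt ht1' hy1' hyt'
  obtain ⟨a, ea⟩ : ∃ a, a = s^2+2*s+3 := ⟨_, rfl⟩
  obtain ⟨b, eb⟩ : ∃ b, b = s^2-2*s+3 := ⟨_, rfl⟩
  obtain ⟨c, ec⟩ : ∃ c, c = s^2+6*s+3 := ⟨_, rfl⟩
  obtain ⟨d, ed⟩ : ∃ d, d = s^2-6*s+3 := ⟨_, rfl⟩
  rw [← ea] at hq ⊢
  rw [← eb] at hq' ⊢
  rw [← ec] at hr ⊢
  rw [← ed] at hr' ⊢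
  field_simp
  rw [ea, eb, ec, ed]
  ring
end

section
/- Define the rational functions of s ∈ ℂ: t(s) = (1−3s²)(3s²+3s+1)²/(2s+1)³ and y(s) = (3s²+2s+1)(3s²+3s+1)/((2s+1)(3s+1)). Then for every s ∈ ℂ such that 2s+1 ≠ 0, 3s+1 ≠ 0, t'(s) ≠ 0, t(s) ∉ {0,1}, and y(s) ∉ {0, 1, t(s)}, the pair (t, y) is a parametric solution of the sixth Painlevé equation PVI(α,β,γ,δ) at s with θ-tuple (θ₀, θ₁, θ_t, θ_∞) = (1/3, 1/2, 1/3, 1/2), i.e. α = 1/8, β = −1/18, γ = 1/8, δ = 4/9. -/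
noncomputable def tFun9 : ℂ → ℂ := fun s => (1-3*s^2)*(3*s^2+3*s+1)^2/(2*s+1)^3

noncomputable def yFun9 : ℂ → ℂ := fun s => (3*s^2+2*s+1)*(3*s^2+3*s+1)/((2*s+1)*(3*s+1))

theorem hasDeriv_t9 (s : ℂ) (h1 : 2*s+1 ≠ 0) :
    deriv tFun9 s = -6*s^2*(3*s+2)^2*(3*s^2+3*s+1)/(2*s+1)^4 := by
  have hs := hasDerivAt_id' s
  have hL : HasDerivAt (fun u : ℂ => 2*u+1) (2*1) s := (hs.const_mul 2).add_const 1
  have hB : HasDerivAt (fun u : ℂ => 3*u^2+3*u+1) (3*(2*s)+3*1) s := by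
    have h := (((hs.pow 2).const_mul 3).add (hs.const_mul 3)).add_const 1
    exact h.congr_deriv (by norm_num)
  have hA : HasDerivAt (fun u : ℂ => 1-3*u^2) (-(3*(2*s))) s := by
    have h := ((hs.pow 2).const_mul 3).const_sub 1
    exact h.congr_deriv (by norm_num)
  have h := ((hA.mul (hB.pow 2)).div (hL.pow 3) (pow_ne_zero 3 h1))
  have h' : HasDerivAt tFun9 _ s := h
  rw [h'.deriv]
  simp only [Pi.mul_apply, Pi.pow_apply]
  field_simp
  push_cast
  ring

theorem hasDeriv_y9 (s : ℂ) (h1 : 2*s+1 ≠ 0) (h2 : 3*s+1 ≠ 0) :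
    deriv yFun9 s = s*(12+75*s+186*s^2+225*s^3+108*s^4)/((2*s+1)^2*(3*s+1)^2) := by
  have hs := hasDerivAt_id' s
  have hL : HasDerivAt (fun u : ℂ => 2*u+1) (2*1) s := (hs.const_mul 2).add_const 1
  have hM : HasDerivAt (fun u : ℂ => 3*u+1) (3*1) s := (hs.const_mul 3).add_const 1
  have hB : HasDerivAt (fun u : ℂ => 3*u^2+3*u+1) (3*(2*s)+3*1) s := by
    have h := (((hs.pow 2).const_mul 3).add (hs.const_mul 3)).add_const 1
    exact h.congr_deriv (by norm_num)
  have hC : HasDerivAt (fun u : ℂ => 3*u^2+2*u+1) (3*(2*s)+2*1) s := by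
    have h := (((hs.pow 2).const_mul 3).add (hs.const_mul 2)).add_const 1
    exact h.congr_deriv (by norm_num)
  have h := ((hC.mul hB).div (hL.mul hM) (mul_ne_zero h1 h2))
  have h' : HasDerivAt yFun9 _ s := h
  rw [h'.deriv]
  simp only [Pi.mul_apply]
  field_simp
  ring

theorem hasDeriv_p9 (s : ℂ) (h1 : 2*s+1 ≠ 0) (h2 : 3*s+1 ≠ 0) (h0 : s ≠ 0)
    (hK : 3*s+2 ≠ 0) (hb : 3*s^2+3*s+1 ≠ 0) :
    deriv (fun u => deriv yFun9 u / deriv tFun9 u) s =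
     ((75+372*s+675*s^2+432*s^3)*(2*s+1)^2 + (12+75*s+186*s^2+225*s^3+108*s^4)*(4*(2*s+1)))
       /(-6*s*(3*s+2)^2*(3*s^2+3*s+1)*(3*s+1)^2)
     - ((12+75*s+186*s^2+225*s^3+108*s^4)*(2*s+1)^2)
       /(-6*s*(3*s+2)^2*(3*s^2+3*s+1)*(3*s+1)^2)
       * (1/s+6/(3*s+2)+(6*s+3)/(3*s^2+3*s+1)+6/(3*s+1)) := by
  have hs := hasDerivAt_id' s
  have e : (fun u => deriv yFun9 u / deriv tFun9 u) =ᶠ[nhds s]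
      fun u => ((12+75*u+186*u^2+225*u^3+108*u^4)*(2*u+1)^2)
       /(-6*u*(3*u+2)^2*(3*u^2+3*u+1)*(3*u+1)^2) := by
    have c1 : ∀ᶠ u in nhds s, 2*u+1 ≠ 0 :=
      (by fun_prop : ContinuousAt (fun u : ℂ => 2*u+1) s).eventually_ne h1
    have c2 : ∀ᶠ u in nhds s, 3*u+1 ≠ 0 :=
      (by fun_prop : ContinuousAt (fun u : ℂ => 3*u+1) s).eventually_ne h2
    have c3 : ∀ᶠ u in nhds s, 3*u+2 ≠ 0 :=
      (by fun_prop : ContinuousAt (fun u : ℂ => 3*u+2) s).eventually_ne hK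
    have c4 : ∀ᶠ u in nhds s, 3*u^2+3*u+1 ≠ 0 :=
      (by fun_prop : ContinuousAt (fun u : ℂ => 3*u^2+3*u+1) s).eventually_ne hb
    have c5 : ∀ᶠ u in nhds s, u ≠ 0 := eventually_ne_nhds h0
    filter_upwards [c1, c2, c3, c4, c5] with u k1 k2 k3 k4 k5
    rw [hasDeriv_t9 u k1, hasDeriv_y9 u k1 k2]
    field_simp
  rw [e.deriv_eq]
  have hL : HasDerivAt (fun u : ℂ => 2*u+1) (2*1) s := (hs.const_mul 2).add_const 1
  have hM : HasDerivAt (fun u : ℂ => 3*u+1) (3*1) s := (hs.const_mul 3).add_const 1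
  have hK' : HasDerivAt (fun u : ℂ => 3*u+2) (3*1) s := (hs.const_mul 3).add_const 2
  have hB : HasDerivAt (fun u : ℂ => 3*u^2+3*u+1) (3*(2*s)+3*1) s := by
    have h := (((hs.pow 2).const_mul 3).add (hs.const_mul 3)).add_const 1
    exact h.congr_deriv (by norm_num)
  have hQ : HasDerivAt (fun u : ℂ => 12+75*u+186*u^2+225*u^3+108*u^4)
      (75+372*s+675*s^2+432*s^3) s := by
    have h := ((((hs.const_mul 75).const_add 12).add ((hs.pow 2).const_mul 186)).add
      ((hs.pow 3).const_mul 225)).add ((hs.pow 4).const_mul 108)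
    exact h.congr_deriv (by push_cast; ring)
  have hd : -6*s*(3*s+2)^2*(3*s^2+3*s+1)*(3*s+1)^2 ≠ 0 := by
    simp [h0, hK, hb, h2]
  have h := (hQ.mul (hL.pow 2)).div
    ((((hs.const_mul (-6)).mul (hK'.pow 2)).mul hB).mul (hM.pow 2)) hd
  have h' : HasDerivAt (fun u : ℂ => ((12+75*u+186*u^2+225*u^3+108*u^4)*(2*u+1)^2)
       /(-6*u*(3*u+2)^2*(3*u^2+3*u+1)*(3*u+1)^2)) _ s := h
  rw [h'.deriv]
  simp only [Pi.mul_apply, Pi.pow_apply]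
  push_cast
  clear h h' hQ hB hL hM hK' hs e hd
  obtain ⟨b, eb⟩ : ∃ b, b = 3*s^2+3*s+1 := ⟨_, rfl⟩
  rw [← eb] at hb ⊢
  obtain ⟨L, eL⟩ : ∃ L, L = 2*s+1 := ⟨_, rfl⟩
  rw [← eL] at h1 ⊢
  obtain ⟨M, eM⟩ : ∃ M, M = 3*s+1 := ⟨_, rfl⟩
  rw [← eM] at h2 ⊢
  obtain ⟨K, eK⟩ : ∃ K, K = 3*s+2 := ⟨_, rfl⟩
  rw [← eK] at hK ⊢
  field_simp
  subst eb eL eM eK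
  ring

/-- Parametric algebraic solution of the sixth Painlevé equation. -/
theorem stmt_9 (s : ℂ)
    (h1 : 2*s+1 ≠ 0)
    (h2 : 3*s+1 ≠ 0)
    (hdt : deriv tFun9 s ≠ 0)
    (ht0 : tFun9 s ≠ 0) (ht1 : tFun9 s ≠ 1)
    (hy0 : yFun9 s ≠ 0) (hy1 : yFun9 s ≠ 1) (hyt : yFun9 s ≠ tFun9 s) :
    deriv (fun u => deriv yFun9 u / deriv tFun9 u) s / deriv tFun9 s =
      (1/2) * (1/(yFun9 s) + 1/(yFun9 s - 1) + 1/(yFun9 s - tFun9 s)) *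
          (deriv yFun9 s / deriv tFun9 s)^2
        - (1/(tFun9 s) + 1/(tFun9 s - 1) + 1/(yFun9 s - tFun9 s)) *
          (deriv yFun9 s / deriv tFun9 s)
        + (yFun9 s * (yFun9 s - 1) * (yFun9 s - tFun9 s) /
            ((tFun9 s)^2 * (tFun9 s - 1)^2)) *
          ((1/8 : ℂ) + (-1/18 : ℂ) * tFun9 s / (yFun9 s)^2
            + (1/8 : ℂ) * (tFun9 s - 1) / (yFun9 s - 1)^2
            + (4/9 : ℂ) * tFun9 s * (tFun9 s - 1) / (yFun9 s - tFun9 s)^2) := by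
  have et : tFun9 s = (1-3*s^2)*(3*s^2+3*s+1)^2/(2*s+1)^3 := rfl
  have ey : yFun9 s = (3*s^2+2*s+1)*(3*s^2+3*s+1)/((2*s+1)*(3*s+1)) := rfl
  have et1 : tFun9 s - 1 = -(s^3*(3*s+2)^3)/(2*s+1)^3 := by
    rw [et]
    obtain ⟨L, eL⟩ : ∃ L, L = 2*s+1 := ⟨_, rfl⟩
    rw [← eL] at h1 ⊢
    field_simp
    subst eL
    ring
  have ey1 : yFun9 s - 1 = 3*s^2*(s+1)*(3*s+2)/((2*s+1)*(3*s+1)) := by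
    rw [ey]
    obtain ⟨L, eL⟩ : ∃ L, L = 2*s+1 := ⟨_, rfl⟩
    rw [← eL] at h1 ⊢
    obtain ⟨M, eM⟩ : ∃ M, M = 3*s+1 := ⟨_, rfl⟩
    rw [← eM] at h2 ⊢
    field_simp
    subst eL eM
    ring
  have eyt : yFun9 s - tFun9 s =
      s^2*(3*s+2)*(3*s^2+3*s+1)*(9*s^2+10*s+3)/((2*s+1)^3*(3*s+1)) := by
    rw [ey, et]; field_simp; ring
  have nt1 := sub_ne_zero.2 ht1
  have ny1 := sub_ne_zero.2 hy1
  have nyt := sub_ne_zero.2 hyt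
  rw [et1] at nt1
  rw [ey1] at ny1
  rw [eyt] at nyt
  have h0 : s ≠ 0 := by rintro rfl; simp at nt1
  have hK : 3*s+2 ≠ 0 := by intro h; simp [h] at nt1
  have hb : 3*s^2+3*s+1 ≠ 0 := by intro h; simp [et, h] at ht0
  have ha : 1-3*s^2 ≠ 0 := by intro h; simp [et, h] at ht0
  have hc : 3*s^2+2*s+1 ≠ 0 := by intro h; simp [ey, h] at hy0
  have hs1 : s+1 ≠ 0 := by intro h; simp [h] at ny1
  have hr : 9*s^2+10*s+3 ≠ 0 := by intro h; simp [h] at nyt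
  rw [hasDeriv_p9 s h1 h2 h0 hK hb, hasDeriv_t9 s h1, hasDeriv_y9 s h1 h2, et1, ey1, eyt, et, ey]
  clear nt1 ny1 nyt et1 ey1 eyt et ey hdt ht0 ht1 hy0 hy1 hyt
  obtain ⟨b, eb⟩ : ∃ b, b = 3*s^2+3*s+1 := ⟨_, rfl⟩
  rw [← eb] at hb ⊢
  obtain ⟨a, ea⟩ : ∃ a, a = 1-3*s^2 := ⟨_, rfl⟩
  rw [← ea] at ha ⊢
  obtain ⟨c, ec⟩ : ∃ c, c = 3*s^2+2*s+1 := ⟨_, rfl⟩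
  rw [← ec] at hc ⊢
  obtain ⟨r, er⟩ : ∃ r, r = 9*s^2+10*s+3 := ⟨_, rfl⟩
  rw [← er] at hr ⊢
  obtain ⟨L, eL⟩ : ∃ L, L = 2*s+1 := ⟨_, rfl⟩
  rw [← eL] at h1 ⊢
  obtain ⟨M, eM⟩ : ∃ M, M = 3*s+1 := ⟨_, rfl⟩
  rw [← eM] at h2 ⊢
  obtain ⟨K, eK⟩ : ∃ K, K = 3*s+2 := ⟨_, rfl⟩
  rw [← eK] at hK ⊢
  obtain ⟨n, en⟩ : ∃ n, n = s+1 := ⟨_, rfl⟩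
  rw [← en] at hs1 ⊢
  field_simp
  subst eb ea ec er eL eM eK en
  ring
end

section
/- Define the rational functions of s ∈ ℂ: t(s) = (s+1)⁴(2s−1)²/(8s³(3s²−1)) and y(s) = (3s−1)(2s−1)(s+1)³/(4s(3s²−1)(s²+1)). Then for every s ∈ ℂ such that s ≠ 0, 3s²−1 ≠ 0, s²+1 ≠ 0, t'(s) ≠ 0, t(s) ∉ {0,1}, and y(s) ∉ {0, 1, t(s)}, the pair (t, y) is a parametric solution of the sixth Painlevé equation PVI(α,β,γ,δ) at s with θ-tuple (θ₀, θ₁, θ_t, θ_∞) = (1/4, 1/4, 1/3, 1/3), i.e. α = 2/9, β = −1/32, γ = 1/32, δ = 4/9. -/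
noncomputable def tFun10 : ℂ → ℂ := fun s => (s+1)^4*(2*s-1)^2/(8*s^3*(3*s^2-1))

noncomputable def yFun10 : ℂ → ℂ := fun s => (3*s-1)*(2*s-1)*(s+1)^3/(4*s*(3*s^2-1)*(s^2+1))

lemma t_hasDeriv (s : ℂ) (h1 : s ≠ 0) (h2 : 3*s^2-1 ≠ 0) :
    HasDerivAt tFun10 (3*(s+1)^3*(2*s-1)*(s-1)^3*(2*s+1)/(8*s^4*(3*s^2-1)^2)) s := by
  have hi := hasDerivAt_id' s
  have hn := ((hi.add_const 1).pow 4).mul (((hi.const_mul 2).sub_const 1).pow 2)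
  have hd := ((hi.pow 3).const_mul 8).mul (((hi.pow 2).const_mul 3).sub_const 1)
  have hne : 8*s^3*(3*s^2-1) ≠ 0 := by simp [h1, h2]
  refine (hn.div hd hne).congr_deriv ?_
  simp only [Pi.mul_apply, Pi.pow_apply]
  rw [div_eq_div_iff (pow_ne_zero 2 hne) (by simp [h1, h2])]
  norm_num
  ring

lemma y_hasDeriv (s : ℂ) (h1 : s ≠ 0) (h2 : 3*s^2-1 ≠ 0) (h3 : s^2+1 ≠ 0) :
    HasDerivAt yFun10
      ((s+1)^2*(s-1)^2*(1+2*s^2-39*s^4)/(4*s^2*(3*s^2-1)^2*(s^2+1)^2)) s := by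
  have hi := hasDerivAt_id' s
  have hn := (((hi.const_mul 3).sub_const 1).mul ((hi.const_mul 2).sub_const 1)).mul
    ((hi.add_const 1).pow 3)
  have hd := ((hi.const_mul 4).mul (((hi.pow 2).const_mul 3).sub_const 1)).mul
    ((hi.pow 2).add_const 1)
  have hne : 4*s*(3*s^2-1)*(s^2+1) ≠ 0 := by simp [h1, h2, h3]
  refine (hn.div hd hne).congr_deriv ?_
  simp only [Pi.mul_apply, Pi.pow_apply]
  rw [div_eq_div_iff (pow_ne_zero 2 hne) (by simp [h1, h2, h3])]
  norm_num
  ring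

lemma p_hasDeriv (s : ℂ) (h3 : s^2+1 ≠ 0) (h4 : s^2-1 ≠ 0) (h5 : 4*s^2-1 ≠ 0) :
    HasDerivAt (fun s : ℂ => 2*s^2*(1+2*s^2-39*s^4)/(3*(s^2+1)^2*(s^2-1)*(4*s^2-1)))
      (((4*s+16*s^3-468*s^5)*((s^2+1)*(s^2-1)*(4*s^2-1))
        - 2*s^2*(1+2*s^2-39*s^4)*
          (4*s*(s^2-1)*(4*s^2-1) + 2*s*(s^2+1)*(4*s^2-1) + 8*s*(s^2+1)*(s^2-1)))
        /(3*(s^2+1)^3*(s^2-1)^2*(4*s^2-1)^2)) s := by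
  have hi := hasDerivAt_id' s
  have hn := ((hi.pow 2).const_mul 2).mul
    ((((hi.pow 2).const_mul 2).const_add 1).sub ((hi.pow 4).const_mul 39))
  have hd := (((((hi.pow 2).add_const 1).pow 2).const_mul 3).mul
    ((hi.pow 2).sub_const 1)).mul (((hi.pow 2).const_mul 4).sub_const 1)
  have hne : 3*(s^2+1)^2*(s^2-1)*(4*s^2-1) ≠ 0 := by simp [h3, h4, h5]
  refine (hn.div hd hne).congr_deriv ?_
  simp only [Pi.mul_apply, Pi.pow_apply, Pi.sub_apply]
  rw [div_eq_div_iff (pow_ne_zero 2 hne) (by simp [h3, h4, h5])]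
  norm_num
  ring

/-- Parametric algebraic solution of the sixth Painlevé equation. -/
theorem stmt_10 (s : ℂ)
    (h1 : s ≠ 0)
    (h2 : 3*s^2-1 ≠ 0)
    (h3 : s^2+1 ≠ 0)
    (hdt : deriv tFun10 s ≠ 0)
    (ht0 : tFun10 s ≠ 0) (ht1 : tFun10 s ≠ 1)
    (hy0 : yFun10 s ≠ 0) (hy1 : yFun10 s ≠ 1) (hyt : yFun10 s ≠ tFun10 s) :
    deriv (fun u => deriv yFun10 u / deriv tFun10 u) s / deriv tFun10 s =
      (1/2) * (1/(yFun10 s) + 1/(yFun10 s - 1) + 1/(yFun10 s - tFun10 s)) *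
          (deriv yFun10 s / deriv tFun10 s)^2
        - (1/(tFun10 s) + 1/(tFun10 s - 1) + 1/(yFun10 s - tFun10 s)) *
          (deriv yFun10 s / deriv tFun10 s)
        + (yFun10 s * (yFun10 s - 1) * (yFun10 s - tFun10 s) /
            ((tFun10 s)^2 * (tFun10 s - 1)^2)) *
          ((2/9 : ℂ) + (-1/32 : ℂ) * tFun10 s / (yFun10 s)^2
            + (1/32 : ℂ) * (tFun10 s - 1) / (yFun10 s - 1)^2
            + (4/9 : ℂ) * tFun10 s * (tFun10 s - 1) / (yFun10 s - tFun10 s)^2) := by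
  have hT := t_hasDeriv s h1 h2
  have hY := y_hasDeriv s h1 h2 h3
  have hdt' := hdt
  rw [hT.deriv] at hdt'
  have a1 : s + 1 ≠ 0 := by rintro h; simp [h] at hdt'
  have a2 : s - 1 ≠ 0 := by rintro h; simp [h] at hdt'
  have a3 : 2*s - 1 ≠ 0 := by rintro h; simp [h] at hdt'
  have a4 : 2*s + 1 ≠ 0 := by rintro h; simp [h] at hdt'
  have h4 : s^2-1 ≠ 0 := by
    rw [show s^2-1 = (s+1)*(s-1) by ring]; exact mul_ne_zero a1 a2
  have h5 : 4*s^2-1 ≠ 0 := by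
    rw [show 4*s^2-1 = (2*s-1)*(2*s+1) by ring]; exact mul_ne_zero a3 a4
  have a5 : 3*s-1 ≠ 0 := by
    rintro h; apply hy0; simp [yFun10, h]
  have ey1 : yFun10 s - 1 = -((s-1)^3*(2*s+1)*(3*s+1))/(4*s*(3*s^2-1)*(s^2+1)) := by
    unfold yFun10; field_simp; ring
  have a6 : 3*s+1 ≠ 0 := by
    rintro h; apply hy1; rw [← sub_eq_zero, ey1]; simp [h]
  have et1 : tFun10 s - 1 = (s-1)^4*(2*s+1)^2/(8*s^3*(3*s^2-1)) := by
    unfold tFun10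
    have hne : 8*s^3*(3*s^2-1) ≠ 0 := by simp [h1, h2]
    rw [div_sub_one hne]; congr 1; ring
  have eyt : yFun10 s - tFun10 s
      = -((s+1)^3*(s-1)^3*(2*s-1)*(2*s+1))/(8*s^3*(3*s^2-1)*(s^2+1)) := by
    unfold yFun10 tFun10; field_simp; ring
  have key : ∀ u : ℂ, u ≠ 0 → 3*u^2-1 ≠ 0 → u^2+1 ≠ 0 → u^2-1 ≠ 0 → 4*u^2-1 ≠ 0 →
      deriv yFun10 u / deriv tFun10 u
        = 2*u^2*(1+2*u^2-39*u^4)/(3*(u^2+1)^2*(u^2-1)*(4*u^2-1)) := by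
    intro u b1 b2 b3 b4 b5
    rw [(y_hasDeriv u b1 b2 b3).deriv, (t_hasDeriv u b1 b2).deriv]
    have e : 3*(u+1)^3*(2*u-1)*(u-1)^3*(2*u+1) = 3*(u^2-1)^3*(4*u^2-1) := by ring
    have e' : (u+1)^2*(u-1)^2 = (u^2-1)^2 := by ring
    rw [e, e']
    generalize 3*u^2-1 = A at *
    generalize u^2+1 = B at *
    generalize u^2-1 = C at *
    generalize 4*u^2-1 = D at *
    generalize 1+2*u^2-39*u^4 = E at *
    field_simp
    ring
  have hev : (fun u => deriv yFun10 u / deriv tFun10 u) =ᶠ[nhds s]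
      (fun u : ℂ => 2*u^2*(1+2*u^2-39*u^4)/(3*(u^2+1)^2*(u^2-1)*(4*u^2-1))) := by
    have c1 : ∀ᶠ u : ℂ in nhds s, u ≠ 0 := continuousAt_id.eventually_ne h1
    have c2 : ∀ᶠ u : ℂ in nhds s, 3*u^2-1 ≠ 0 :=
      ContinuousAt.eventually_ne (g := fun u : ℂ => 3*u^2-1) (by fun_prop) h2
    have c3 : ∀ᶠ u : ℂ in nhds s, u^2+1 ≠ 0 :=
      ContinuousAt.eventually_ne (g := fun u : ℂ => u^2+1) (by fun_prop) h3
    have c4 : ∀ᶠ u : ℂ in nhds s, u^2-1 ≠ 0 :=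
      ContinuousAt.eventually_ne (g := fun u : ℂ => u^2-1) (by fun_prop) h4
    have c5 : ∀ᶠ u : ℂ in nhds s, 4*u^2-1 ≠ 0 :=
      ContinuousAt.eventually_ne (g := fun u : ℂ => 4*u^2-1) (by fun_prop) h5
    filter_upwards [c1, c2, c3, c4, c5] with u b1 b2 b3 b4 b5
    exact key u b1 b2 b3 b4 b5
  rw [hev.deriv_eq, (p_hasDeriv s h3 h4 h5).deriv, key s h1 h2 h3 h4 h5, hT.deriv, ey1, et1, eyt]
  rw [show s^2-1 = (s+1)*(s-1) by ring, show 4*s^2-1 = (2*s-1)*(2*s+1) by ring]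
  unfold yFun10 tFun10
  clear hev key eyt et1 ey1 hdt' hY hT hyt hy1 hy0 ht1 ht0 hdt h4 h5
  generalize hA : 3*s^2-1 = A at *
  generalize hB : s^2+1 = B at *
  generalize hC : s+1 = C at *
  generalize hD : s-1 = D at *
  generalize hE : 2*s-1 = E at *
  generalize hF : 2*s+1 = F at *
  generalize hG : 3*s-1 = G at *
  generalize hH : 3*s+1 = H at *
  field_simp
  subst hA hB hC hD hE hF hG hH
  ring
end

section
/- Define the rational functions of s ∈ ℂ: t(s) = −(2s−1)²/(8s) and y(s) = (s−1)(3s−1)(2s−1)/(12s(s²+1)). Then for every s ∈ ℂ such that s ≠ 0, s²+1 ≠ 0, t'(s) ≠ 0, t(s) ∉ {0,1}, and y(s) ∉ {0, 1, t(s)}, the pair (t, y) is a parametric solution of the sixth Painlevé equation PVI(α,β,γ,δ) at s with θ-tuple (θ₀, θ₁, θ_t, θ_∞) = (1/4, 1/4, 1/2, −1/2), i.e. α = 9/8, β = −1/32, γ = 1/32, δ = 3/8. -/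
noncomputable def tFun11 : ℂ → ℂ := fun s => -(2*s-1)^2/(8*s)

noncomputable def yFun11 : ℂ → ℂ := fun s => (s-1)*(3*s-1)*(2*s-1)/(12*s*(s^2+1))

theorem aux_t (s : ℂ) (h1 : s ≠ 0) : deriv tFun11 s = (1-4*s^2)/(8*s^2) := by
  have h : HasDerivAt tFun11 _ s :=
    (((((hasDerivAt_id s).const_mul 2).sub_const 1).pow 2).neg).div
      ((hasDerivAt_id s).const_mul 8) (by simpa using h1)
  rw [h.deriv]
  simp
  field_simp
  ring

theorem aux_y (s : ℂ) (h1 : s ≠ 0) (h2 : s^2+1 ≠ 0) :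
    deriv yFun11 s = (11*s^4-8*s^2+1)/(12*s^2*(s^2+1)^2) := by
  have h : HasDerivAt yFun11 _ s :=
    (((((hasDerivAt_id s).sub_const 1).mul (((hasDerivAt_id s).const_mul 3).sub_const 1)).mul
      (((hasDerivAt_id s).const_mul 2).sub_const 1))).div
      (((hasDerivAt_id s).const_mul 12).mul (((hasDerivAt_id s).pow 2).add_const 1))
      (by simpa using ⟨h1, h2⟩)
  rw [h.deriv]
  simp
  field_simp
  ring

theorem aux_p (s : ℂ) (h1 : s ≠ 0) (h2 : s^2+1 ≠ 0) (h3 : 1-4*s^2 ≠ 0) :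
    deriv (fun u => deriv yFun11 u / deriv tFun11 u) s =
      (2*(44*s^3-16*s)*(3*(s^2+1)^2*(1-4*s^2)) -
        2*(11*s^4-8*s^2+1)*(3*(4*s*(s^2+1)*(1-4*s^2)-8*s*(s^2+1)^2)))
        / (3*(s^2+1)^2*(1-4*s^2))^2 := by
  have he : (fun u => deriv yFun11 u / deriv tFun11 u) =ᶠ[nhds s]
      (fun u => (2*(11*u^4-8*u^2+1)) / (3*(u^2+1)^2*(1-4*u^2))) := by
    have e1 : ∀ᶠ u in nhds s, u ≠ 0 := continuousAt_id.eventually_ne h1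
    have e2 : ∀ᶠ u in nhds s, u^2+1 ≠ 0 :=
      ContinuousAt.eventually_ne (g := fun u : ℂ => u^2+1) (by fun_prop) h2
    have e3 : ∀ᶠ u in nhds s, 1-4*u^2 ≠ 0 :=
      ContinuousAt.eventually_ne (g := fun u : ℂ => 1-4*u^2) (by fun_prop) h3
    filter_upwards [e1, e2, e3] with u a b c
    rw [aux_t u a, aux_y u a b]
    field_simp
    ring
  rw [he.deriv_eq]
  have hA : HasDerivAt (fun u : ℂ => 2*(11*u^4-8*u^2+1)) (2*(44*s^3-16*s)) s := by
    have h := (((((hasDerivAt_id s).pow 4).const_mul 11).sub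
      (((hasDerivAt_id s).pow 2).const_mul 8)).add_const 1).const_mul 2 
    refine HasDerivAt.congr_deriv h ?_
    simp
    ring
  have hB : HasDerivAt (fun u : ℂ => 3*(u^2+1)^2*(1-4*u^2))
      (3*(4*s*(s^2+1)*(1-4*s^2)-8*s*(s^2+1)^2)) s := by
    have h := (((((hasDerivAt_id s).pow 2).add_const 1).pow 2).const_mul 3).mul
      ((((hasDerivAt_id s).pow 2).const_mul 4).const_sub 1) 
    refine HasDerivAt.congr_deriv h ?_
    simp
    ring
  exact (hA.div hB (by simp [h2, h3])).deriv


/-- Parametric algebraic solution of the sixth Painlevé equation. -/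
theorem stmt_11 (s : ℂ)
    (h1 : s ≠ 0)
    (h2 : s^2+1 ≠ 0)
    (hdt : deriv tFun11 s ≠ 0)
    (ht0 : tFun11 s ≠ 0) (ht1 : tFun11 s ≠ 1)
    (hy0 : yFun11 s ≠ 0) (hy1 : yFun11 s ≠ 1) (hyt : yFun11 s ≠ tFun11 s) :
    deriv (fun u => deriv yFun11 u / deriv tFun11 u) s / deriv tFun11 s =
      (1/2) * (1/(yFun11 s) + 1/(yFun11 s - 1) + 1/(yFun11 s - tFun11 s)) *
          (deriv yFun11 s / deriv tFun11 s)^2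
        - (1/(tFun11 s) + 1/(tFun11 s - 1) + 1/(yFun11 s - tFun11 s)) *
          (deriv yFun11 s / deriv tFun11 s)
        + (yFun11 s * (yFun11 s - 1) * (yFun11 s - tFun11 s) /
            ((tFun11 s)^2 * (tFun11 s - 1)^2)) *
          ((9/8 : ℂ) + (-1/32 : ℂ) * tFun11 s / (yFun11 s)^2
            + (1/32 : ℂ) * (tFun11 s - 1) / (yFun11 s - 1)^2
            + (3/8 : ℂ) * tFun11 s * (tFun11 s - 1) / (yFun11 s - tFun11 s)^2) := by
  have et : tFun11 s = -(2*s-1)^2/(8*s) := rfl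
  have ey : yFun11 s = (s-1)*(3*s-1)*(2*s-1)/(12*s*(s^2+1)) := rfl
  have et1 : tFun11 s - 1 = -(2*s+1)^2/(8*s) := by
    rw [et]; field_simp; ring
  have ey1 : yFun11 s - 1 = -((s+1)*(2*s+1)*(3*s+1))/(12*s*(s^2+1)) := by
    rw [ey]; field_simp; ring
  have eyt : yFun11 s - tFun11 s = (2*s-1)*(2*s+1)*(3*s^2-1)/(24*s*(s^2+1)) := by
    rw [ey, et]; field_simp; ring
  have h3 : 1-4*s^2 ≠ 0 := by
    intro h; rw [aux_t s h1, h] at hdt; simp at hdt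
  have f3 : 1-4*s^2 = -((2*s-1)*(2*s+1)) := by ring
  have a1 : 2*s-1 ≠ 0 := by
    intro h; apply h3; rw [f3, h]; ring
  have a2 : 2*s+1 ≠ 0 := by
    intro h; apply h3; rw [f3, h]; ring
  have a3 : s-1 ≠ 0 := by
    intro h; apply hy0; rw [ey, h]; simp
  have a4 : 3*s-1 ≠ 0 := by
    intro h; apply hy0; rw [ey, h]; simp
  have hy1' := sub_ne_zero.2 hy1
  have hyt' := sub_ne_zero.2 hyt
  have a5 : s+1 ≠ 0 := by
    intro h; apply hy1'; rw [ey1, h]; simp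
  have a6 : 3*s+1 ≠ 0 := by
    intro h; apply hy1'; rw [ey1, h]; simp
  have a7 : 3*s^2-1 ≠ 0 := by
    intro h; apply hyt'; rw [eyt, h]; simp
  rw [aux_p s h1 h2 h3, aux_t s h1, aux_y s h1 h2, eyt, ey1, et1, ey, et, f3]
  clear hy1' hyt' hy1 hyt hy0 ht0 ht1 hdt et ey et1 ey1 eyt h3 f3
  obtain ⟨b0, e0⟩ : ∃ b, b = 3*s^2-1 := ⟨_, rfl⟩
  obtain ⟨b1, e1⟩ : ∃ b, b = s^2+1 := ⟨_, rfl⟩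
  obtain ⟨b2, e2⟩ : ∃ b, b = 2*s-1 := ⟨_, rfl⟩
  obtain ⟨b3, e3⟩ : ∃ b, b = 2*s+1 := ⟨_, rfl⟩
  obtain ⟨b4, e4⟩ : ∃ b, b = 3*s-1 := ⟨_, rfl⟩
  obtain ⟨b5, e5⟩ : ∃ b, b = 3*s+1 := ⟨_, rfl⟩
  obtain ⟨b6, e6⟩ : ∃ b, b = s-1 := ⟨_, rfl⟩
  obtain ⟨b7, e7⟩ : ∃ b, b = s+1 := ⟨_, rfl⟩
  rw [← e0, ← e1, ← e2, ← e3, ← e4, ← e5, ← e6, ← e7]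
  rw [← e0] at a7
  rw [← e1] at h2
  rw [← e2] at a1
  rw [← e3] at a2
  rw [← e4] at a4
  rw [← e5] at a6
  rw [← e6] at a3
  rw [← e7] at a5
  field_simp
  subst e0 e1 e2 e3 e4 e5 e6 e7
  ring
end

section
/- Define the rational functions of s ∈ ℂ: t(s) = (s−1)(s+3)³/(16s³) and y(s) = (s+1)(s+3)²/(2s(15+s²)). Then for every s ∈ ℂ such that s ≠ 0, 15+s² ≠ 0, t'(s) ≠ 0, t(s) ∉ {0,1}, and y(s) ∉ {0, 1, t(s)}, the pair (t, y) is a parametric solution of the sixth Painlevé equation PVI(α,β,γ,δ) at s with θ-tuple (θ₀, θ₁, θ_t, θ_∞) = (0, 0, 1/2, 0), i.e. α = 1/2, β = 0, γ = 0, δ = 3/8. -/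
noncomputable def tFun12 : ℂ → ℂ := fun s => (s-1)*(s+3)^3/(16*s^3)

noncomputable def yFun12 : ℂ → ℂ := fun s => (s+1)*(s+3)^2/(2*s*(15+s^2))

theorem tD (s : ℂ) (h1 : s ≠ 0) : deriv tFun12 s = (s-3)^2*(s+3)^2/(16*s^4) := by
  have hn : HasDerivAt (fun u : ℂ => (u-1)*(u+3)^3) (1*(s+3)^3 + (s-1)*((3:ℕ)*(s+3)^(3-1)*1)) s :=
    ((hasDerivAt_id s).sub_const 1).mul (((hasDerivAt_id s).add_const 3).pow 3)
  have hd : HasDerivAt (fun u : ℂ => 16*u^3) (16*((3:ℕ)*s^(3-1)*1)) s :=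
    ((hasDerivAt_id s).pow 3).const_mul 16
  have h := (hn.div hd (by simp [h1])).deriv
  refine Eq.trans h ?_
  push_cast
  norm_num
  field_simp
  ring

theorem yD (s : ℂ) (h1 : s ≠ 0) (h2 : 15+s^2 ≠ 0) :
    deriv yFun12 s = -((s-3)*(s+3)*(7*s^2-15))/(2*s^2*(15+s^2)^2) := by
  have hn : HasDerivAt (fun u : ℂ => (u+1)*(u+3)^2) (1*(s+3)^2 + (s+1)*((2:ℕ)*(s+3)^(2-1)*1)) s :=
    ((hasDerivAt_id s).add_const 1).mul (((hasDerivAt_id s).add_const 3).pow 2)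
  have hd : HasDerivAt (fun u : ℂ => 2*u*(15+u^2)) (2*1*(15+s^2) + 2*s*((2:ℕ)*s^(2-1)*1)) s :=
    ((hasDerivAt_id s).const_mul 2).mul (((hasDerivAt_id s).pow 2).const_add 15)
  have h := (hn.div hd (by simp [h1, h2])).deriv
  refine Eq.trans h ?_
  push_cast
  norm_num
  field_simp
  ring

theorem pD (s : ℂ) (h1 : s ≠ 0) (h2 : 15+s^2 ≠ 0) (h3 : s-3 ≠ 0) (h4 : s+3 ≠ 0) :
    deriv (fun u => deriv yFun12 u / deriv tFun12 u) s =
      (-8*(28*s^3-30*s)*((15+s^2)^2*(s^2-9)) + 8*(7*s^4-15*s^2)*(4*s*(15+s^2)*(s^2-9)+(15+s^2)^2*(2*s)))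
        /((15+s^2)^2*((s-3)*(s+3)))^2 := by
  have he : (fun u => deriv yFun12 u / deriv tFun12 u) =ᶠ[nhds s]
      (fun u => (-8*(7*u^4-15*u^2))/((15+u^2)^2*(u^2-9))) := by
    have c2 : ∀ᶠ u in nhds s, 15+u^2 ≠ 0 :=
      (by fun_prop : ContinuousAt (fun u : ℂ => 15+u^2) s).eventually_ne h2
    have c3 : ∀ᶠ u in nhds s, u-3 ≠ 0 :=
      (by fun_prop : ContinuousAt (fun u : ℂ => u-3) s).eventually_ne h3
    have c4 : ∀ᶠ u in nhds s, u+3 ≠ 0 :=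
      (by fun_prop : ContinuousAt (fun u : ℂ => u+3) s).eventually_ne h4
    filter_upwards [eventually_ne_nhds h1, c2, c3, c4] with u k1 k2 k3 k4
    rw [tD u k1, yD u k1 k2, show u^2-9 = (u-3)*(u+3) by ring]
    field_simp
    ring
  rw [he.deriv_eq]
  have hn : HasDerivAt (fun u : ℂ => -8*(7*u^4-15*u^2))
      (-8*(7*((4:ℕ)*s^(4-1)*1)-15*((2:ℕ)*s^(2-1)*1))) s :=
    ((((hasDerivAt_id s).pow 4).const_mul 7).sub (((hasDerivAt_id s).pow 2).const_mul 15)).const_mul (-8)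
  have hd : HasDerivAt (fun u : ℂ => (15+u^2)^2*(u^2-9))
      (((2:ℕ)*(15+s^2)^(2-1)*((2:ℕ)*s^(2-1)*1))*(s^2-9) + (15+s^2)^2*((2:ℕ)*s^(2-1)*1)) s :=
    ((((hasDerivAt_id s).pow 2).const_add 15).pow 2).mul (((hasDerivAt_id s).pow 2).sub_const 9)
  have h9 : s^2-9 = (s-3)*(s+3) := by ring
  have h := (hn.div hd (by rw [h9]; simp [h2, h3, h4])).deriv
  refine Eq.trans h ?_
  rw [← h9]
  push_cast
  congr 1
  norm_num
  ring

set_option maxHeartbeats 1000000 in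
/-- Parametric algebraic solution of the sixth Painlevé equation. -/
theorem stmt_12 (s : ℂ)
    (h1 : s ≠ 0)
    (h2 : 15+s^2 ≠ 0)
    (hdt : deriv tFun12 s ≠ 0)
    (ht0 : tFun12 s ≠ 0) (ht1 : tFun12 s ≠ 1)
    (hy0 : yFun12 s ≠ 0) (hy1 : yFun12 s ≠ 1) (hyt : yFun12 s ≠ tFun12 s) :
    deriv (fun u => deriv yFun12 u / deriv tFun12 u) s / deriv tFun12 s =
      (1/2) * (1/(yFun12 s) + 1/(yFun12 s - 1) + 1/(yFun12 s - tFun12 s)) *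
          (deriv yFun12 s / deriv tFun12 s)^2
        - (1/(tFun12 s) + 1/(tFun12 s - 1) + 1/(yFun12 s - tFun12 s)) *
          (deriv yFun12 s / deriv tFun12 s)
        + (yFun12 s * (yFun12 s - 1) * (yFun12 s - tFun12 s) /
            ((tFun12 s)^2 * (tFun12 s - 1)^2)) *
          ((1/2 : ℂ) + (0 : ℂ) * tFun12 s / (yFun12 s)^2
            + (0 : ℂ) * (tFun12 s - 1) / (yFun12 s - 1)^2
            + (3/8 : ℂ) * tFun12 s * (tFun12 s - 1) / (yFun12 s - tFun12 s)^2) := by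
  have e0 : tFun12 s = (s-1)*(s+3)^3/(16*s^3) := rfl
  have e1 : tFun12 s - 1 = (s+1)*(s-3)^3/(16*s^3) := by rw [e0]; field_simp; ring
  have f0 : yFun12 s = (s+1)*(s+3)^2/(2*s*(15+s^2)) := rfl
  have f1 : yFun12 s - 1 = -((s-1)*(s-3)^2)/(2*s*(15+s^2)) := by rw [f0]; field_simp; ring
  have f2 : yFun12 s - tFun12 s = -((s+3)^2*(s-3)^2*(s^2-5))/(16*s^3*(15+s^2)) := by
    rw [f0, e0]; field_simp; ring
  have h3 : s-3 ≠ 0 := by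
    intro h; apply hdt; rw [tD s h1, h]; simp
  have h4 : s+3 ≠ 0 := by
    intro h; apply hdt; rw [tD s h1, h]; simp
  have h5 : s-1 ≠ 0 := by
    intro h; apply ht0; rw [e0, h]; simp
  have h6 : s+1 ≠ 0 := by
    intro h; apply hy0; rw [f0, h]; simp
  have h7 : s^2-5 ≠ 0 := by
    intro h; apply sub_ne_zero.2 hyt; rw [f2, h]; simp
  rw [pD s h1 h2 h3 h4, f2, f1, e1, tD s h1, yD s h1 h2, f0, e0]
  clear e0 e1 f0 f1 f2 hdt ht0 ht1 hy0 hy1 hyt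
  field_simp
  ring
end

section
/- Define the rational functions of s ∈ ℂ: t(s) = −2⁸·s³(s²−5)/((s−1)⁵(s+3)³(s²−4s−1)) and y(s) = −2⁶·s²/((s−1)(s+3)(s²+3)(s²−4s−1)). Then for every s ∈ ℂ such that s ≠ 1, s ≠ −3, s²−4s−1 ≠ 0, s²+3 ≠ 0, t'(s) ≠ 0, t(s) ∉ {0,1}, and y(s) ∉ {0, 1, t(s)}, the pair (t, y) is a parametric solution of the sixth Painlevé equation PVI(α,β,γ,δ) at s with θ-tuple (θ₀, θ₁, θ_t, θ_∞) = (1/5, 1/5, 1/5, 1/5), i.e. α = 8/25, β = −1/50, γ = 1/50, δ = 12/25. -/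
noncomputable def tFun13 : ℂ → ℂ := fun s => -(2^8*s^3*(s^2-5))/((s-1)^5*(s+3)^3*(s^2-4*s-1))

noncomputable def yFun13 : ℂ → ℂ := fun s => -(2^6*s^2)/((s-1)*(s+3)*(s^2+3)*(s^2-4*s-1))

theorem t13_hasDeriv (s : ℂ) (hA : s - 1 ≠ 0) (hB : s + 3 ≠ 0) (hC : s^2-4*s-1 ≠ 0) :
    HasDerivAt tFun13 (1280*s^2*(s+1)^4*(s-3)^2/((s-1)^6*(s+3)^4*(s^2-4*s-1)^2)) s := by
  have h := (((((hasDerivAt_id s).pow 3).const_mul (2^8)).mul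
    (((hasDerivAt_id s).pow 2).sub_const 5)).neg).div
    ((((((hasDerivAt_id s).sub_const 1).pow 5).mul (((hasDerivAt_id s).add_const 3).pow 3)).mul
    ((((hasDerivAt_id s).pow 2).sub ((hasDerivAt_id s).const_mul 4)).sub_const 1)))
    (by simp; exact ⟨⟨hA, hB⟩, hC⟩)
  refine HasDerivAt.congr_deriv h ?_
  simp
  generalize hc : s^2-4*s-1 = c at *
  field_simp
  subst hc
  ring

theorem y13_hasDeriv (s : ℂ) (hA : s - 1 ≠ 0) (hB : s + 3 ≠ 0) (hC : s^2-4*s-1 ≠ 0)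
    (hD : s^2+3 ≠ 0) :
    HasDerivAt yFun13 (128*s*(s+1)^3*(s-3)*(2*s^2-3*s+3)/
      ((s-1)^2*(s+3)^2*(s^2-4*s-1)^2*(s^2+3)^2)) s := by
  have h := ((((hasDerivAt_id s).pow 2).const_mul (2^6)).neg).div
    ((((((hasDerivAt_id s).sub_const 1)).mul (((hasDerivAt_id s).add_const 3))).mul
    (((hasDerivAt_id s).pow 2).add_const 3)).mul
    ((((hasDerivAt_id s).pow 2).sub ((hasDerivAt_id s).const_mul 4)).sub_const 1))
    (by simp; exact ⟨⟨⟨hA, hB⟩, hD⟩, hC⟩)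
  refine HasDerivAt.congr_deriv h ?_
  simp
  generalize hc : s^2-4*s-1 = c at *
  generalize hd : s^2+3 = d at *
  field_simp
  subst hc hd
  ring

theorem p13_hasDeriv (s : ℂ) (hs : s ≠ 0) (hG : s + 1 ≠ 0) (hH : s - 3 ≠ 0) (hD : s^2+3 ≠ 0) :
    HasDerivAt (fun s : ℂ => (s-1)^4*(s+3)^2*(2*s^2-3*s+3)/(10*s*(s+1)*(s-3)*(s^2+3)^2))
      ((s-1)^3*(s+3)*(s^2-4*s-1)*(2*s^6+45*s^4+81)/(10*s^2*(s+1)^2*(s-3)^2*(s^2+3)^3)) s := by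
  have h := (((((hasDerivAt_id s).sub_const 1).pow 4).mul (((hasDerivAt_id s).add_const 3).pow 2)).mul
    (((((hasDerivAt_id s).pow 2).const_mul 2).sub ((hasDerivAt_id s).const_mul 3)).add_const 3)).div
    (((((hasDerivAt_id s).const_mul 10).mul ((hasDerivAt_id s).add_const 1)).mul
      ((hasDerivAt_id s).sub_const 3)).mul ((((hasDerivAt_id s).pow 2).add_const 3).pow 2))
    (by simp; exact ⟨⟨⟨hs, hG⟩, hH⟩, hD⟩)
  refine HasDerivAt.congr_deriv h ?_
  simp
  generalize hd : s^2+3 = d at *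
  field_simp
  subst hd
  ring

/-- Parametric algebraic solution of the sixth Painlevé equation. -/
theorem stmt_13 (s : ℂ)
    (h1 : s ≠ 1)
    (h2 : s ≠ -3)
    (h3 : s^2-4*s-1 ≠ 0)
    (h4 : s^2+3 ≠ 0)
    (hdt : deriv tFun13 s ≠ 0)
    (ht0 : tFun13 s ≠ 0) (ht1 : tFun13 s ≠ 1)
    (hy0 : yFun13 s ≠ 0) (hy1 : yFun13 s ≠ 1) (hyt : yFun13 s ≠ tFun13 s) :
    deriv (fun u => deriv yFun13 u / deriv tFun13 u) s / deriv tFun13 s =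
      (1/2) * (1/(yFun13 s) + 1/(yFun13 s - 1) + 1/(yFun13 s - tFun13 s)) *
          (deriv yFun13 s / deriv tFun13 s)^2
        - (1/(tFun13 s) + 1/(tFun13 s - 1) + 1/(yFun13 s - tFun13 s)) *
          (deriv yFun13 s / deriv tFun13 s)
        + (yFun13 s * (yFun13 s - 1) * (yFun13 s - tFun13 s) /
            ((tFun13 s)^2 * (tFun13 s - 1)^2)) *
          ((8/25 : ℂ) + (-1/50 : ℂ) * tFun13 s / (yFun13 s)^2
            + (1/50 : ℂ) * (tFun13 s - 1) / (yFun13 s - 1)^2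
            + (12/25 : ℂ) * tFun13 s * (tFun13 s - 1) / (yFun13 s - tFun13 s)^2) := by
  have hA : s - 1 ≠ 0 := sub_ne_zero.2 h1
  have hB : s + 3 ≠ 0 := fun h => h2 (eq_neg_of_add_eq_zero_left h)
  have et : tFun13 s = -(256*s^3*(s^2-5))/((s-1)^5*(s+3)^3*(s^2-4*s-1)) := by
    norm_num [tFun13]
  have et1 : tFun13 s - 1 = -((s+1)^5*(s-3)^3*(s^2+4*s-1))/((s-1)^5*(s+3)^3*(s^2-4*s-1)) := by
    rw [et, div_sub_one (by positivity)]
    congr 1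
    ring
  have ey : yFun13 s = -(64*s^2)/((s-1)*(s+3)*(s^2+3)*(s^2-4*s-1)) := by
    norm_num [yFun13]
  have ey1 : yFun13 s - 1 = -((s+1)^4*(s-3)^2)/((s-1)*(s+3)*(s^2+3)*(s^2-4*s-1)) := by
    rw [ey, div_sub_one (by positivity)]
    congr 1
    ring
  have eyt : yFun13 s - tFun13 s =
      -(64*s^2*(s+1)^4*(s-3)^2)/((s-1)^5*(s+3)^3*(s^2+3)*(s^2-4*s-1)) := by
    rw [ey, et, div_sub_div _ _ (by positivity) (by positivity), div_eq_div_iff (by positivity) (by positivity)]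
    ring
  have hs : s ≠ 0 := by
    rintro rfl
    simp [et] at ht0
  have hE : s^2-5 ≠ 0 := by
    intro h
    simp [et, h] at ht0
  have ht1' := sub_ne_zero.2 ht1
  have hG : s + 1 ≠ 0 := by
    intro h
    simp [et1, h] at ht1'
  have hH : s - 3 ≠ 0 := by
    intro h
    simp [et1, h] at ht1'
  have hK : s^2+4*s-1 ≠ 0 := by
    intro h
    simp [et1, h] at ht1'
  have edt := (t13_hasDeriv s hA hB h3).deriv
  have edy := (y13_hasDeriv s hA hB h3 h4).deriv
  have key : ∀ u : ℂ, u ≠ 0 → u - 1 ≠ 0 → u + 3 ≠ 0 → u^2-4*u-1 ≠ 0 → u^2+3 ≠ 0 → u + 1 ≠ 0 →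
      u - 3 ≠ 0 → deriv yFun13 u / deriv tFun13 u =
        (u-1)^4*(u+3)^2*(2*u^2-3*u+3)/(10*u*(u+1)*(u-3)*(u^2+3)^2) := by
    intro u g0 g1 g2 g3 g4 g5 g6
    rw [(t13_hasDeriv u g1 g2 g3).deriv, (y13_hasDeriv u g1 g2 g3 g4).deriv]
    generalize u^2-4*u-1 = c at *
    generalize u^2+3 = d at *
    generalize 2*u^2-3*u+3 = e at *
    field_simp
    ring
  have ev : ∀ f : ℂ → ℂ, Continuous f → f s ≠ 0 → ∀ᶠ u in nhds s, f u ≠ 0 :=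
    fun f hf h => hf.continuousAt.eventually_ne h
  have hev : (fun u => deriv yFun13 u / deriv tFun13 u) =ᶠ[nhds s]
      (fun u : ℂ => (u-1)^4*(u+3)^2*(2*u^2-3*u+3)/(10*u*(u+1)*(u-3)*(u^2+3)^2)) := by
    filter_upwards [ev (fun u => u) (by fun_prop) hs, ev (fun u => u - 1) (by fun_prop) hA,
      ev (fun u => u + 3) (by fun_prop) hB, ev (fun u => u^2-4*u-1) (by fun_prop) h3,
      ev (fun u => u^2+3) (by fun_prop) h4, ev (fun u => u+1) (by fun_prop) hG,
      ev (fun u => u-3) (by fun_prop) hH] with u g0 g1 g2 g3 g4 g5 g6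
    exact key u g0 g1 g2 g3 g4 g5 g6
  have edp := ((p13_hasDeriv s hs hG hH h4).congr_of_eventuallyEq hev).deriv
  rw [edp, key s hs hA hB h3 h4 hG hH, edt, et1, ey1, eyt, et, ey]
  clear edp hev ev key edt edy et1 ey1 eyt et ey ht1' ht0 ht1 hy0 hy1 hyt hdt h1 h2
  generalize hc : s^2-4*s-1 = c at *
  generalize hd : s^2+3 = d at *
  generalize he : s^2-5 = e at *
  generalize hk : s^2+4*s-1 = k at *
  generalize hf : 2*s^2-3*s+3 = f at *
  generalize ha : s-1 = a at *
  generalize hb : s+3 = b at *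
  generalize hg : s+1 = g at *
  generalize hh : s-3 = h at *
  field_simp
  subst hc hd he hk hf ha hb hg hh
  ring
end

section
/- Define the rational functions of s ∈ ℂ: t(s) = 2⁴·s³/((s+3)³(s−1)) and y(s) = 4(s²+4s−1)s²/(5(s+3)(s²+3)(s−1)). Then for every s ∈ ℂ such that s ≠ −3, s ≠ 1, s²+3 ≠ 0, t'(s) ≠ 0, t(s) ∉ {0,1}, and y(s) ∉ {0, 1, t(s)}, the pair (t, y) is a parametric solution of the sixth Painlevé equation PVI(α,β,γ,δ) at s with θ-tuple (θ₀, θ₁, θ_t, θ_∞) = (1/4, 1/4, 1/4, −1/4), i.e. α = 25/32, β = −1/32, γ = 1/32, δ = 15/32. -/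
noncomputable def tFun14 : ℂ → ℂ := fun s => 2^4*s^3/((s+3)^3*(s-1))

noncomputable def yFun14 : ℂ → ℂ := fun s => 4*(s^2+4*s-1)*s^2/(5*(s+3)*(s^2+3)*(s-1))

lemma t_hd (s : ℂ) (a : s + 3 ≠ 0) (b : s - 1 ≠ 0) :
    deriv tFun14 s = -16*s^2*(s-3)^2/((s+3)^4*(s-1)^2) := by
  have hn : HasDerivAt (fun u : ℂ => 2^4*u^3) (2^4*(3*s^2)) s := by
    simpa using (hasDerivAt_pow 3 s).const_mul (2^4 : ℂ)
  have hd : HasDerivAt (fun u : ℂ => (u+3)^3*(u-1)) (3*(s+3)^2*(s-1)+(s+3)^3) s := by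
    have := (((hasDerivAt_id s).add_const 3).pow 3).mul ((hasDerivAt_id s).sub_const 1)
    refine HasDerivAt.congr_deriv this ?_
    simp
  have h := hn.div hd (by simp [*])
  have e : deriv tFun14 s = _ := h.deriv
  rw [e]
  field_simp
  ring

lemma y_hd (s : ℂ) (a : s + 3 ≠ 0) (b : s - 1 ≠ 0) (c : s^2+3 ≠ 0) :
    deriv yFun14 s = -8*s*(s-3)*(s^4+2*s^3-4*s^2-18*s+3)/(5*(s+3)^2*(s^2+3)^2*(s-1)^2) := by
  have hi := hasDerivAt_id s
  have h2 := hasDerivAt_pow 2 s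
  have hn : HasDerivAt (fun u : ℂ => 4*(u^2+4*u-1)*u^2)
      (4*(2*s+4)*s^2+4*(s^2+4*s-1)*(2*s)) s := by
    have := (((h2.add (hi.const_mul 4)).sub_const 1).const_mul 4).mul h2
    refine HasDerivAt.congr_deriv this ?_
    simp
  have hd : HasDerivAt (fun u : ℂ => 5*(u+3)*(u^2+3)*(u-1))
      ((5*(s^2+3)+5*(s+3)*(2*s))*(s-1)+5*(s+3)*(s^2+3)) s := by
    have := (((hi.add_const 3).const_mul 5).mul (h2.add_const 3)).mul (hi.sub_const 1)
    refine HasDerivAt.congr_deriv this ?_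
    simp
  have h := hn.div hd (by simp [*])
  have e : deriv yFun14 s = _ := h.deriv
  rw [e]
  field_simp
  ring

lemma p_hd (s : ℂ) (a : s ≠ 0) (b : s - 3 ≠ 0) (c : s^2+3 ≠ 0) :
    deriv (fun u : ℂ => (u^4+2*u^3-4*u^2-18*u+3)*(u+3)^2/(10*u*(u-3)*(u^2+3)^2)) s =
    (((4*s^3+6*s^2-8*s-18)*(s+3)^2+(s^4+2*s^3-4*s^2-18*s+3)*(2*(s+3)))*(s*(s-3)*(s^2+3))
      - (s^4+2*s^3-4*s^2-18*s+3)*(s+3)^2*((2*s-3)*(s^2+3)+s*(s-3)*(4*s)))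
      /(10*s^2*(s-3)^2*(s^2+3)^3) := by
  have hi := hasDerivAt_id s
  have h2 := hasDerivAt_pow 2 s
  have hn : HasDerivAt (fun u : ℂ => (u^4+2*u^3-4*u^2-18*u+3)*(u+3)^2)
      ((4*s^3+6*s^2-8*s-18)*(s+3)^2+(s^4+2*s^3-4*s^2-18*s+3)*(2*(s+3))) s := by
    have := (((((hasDerivAt_pow 4 s).add ((hasDerivAt_pow 3 s).const_mul 2)).sub
      (h2.const_mul 4)).sub (hi.const_mul 18)).add_const 3).mul ((hi.add_const 3).pow 2)
    refine HasDerivAt.congr_deriv this ?_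
    simp
    ring_nf
    try simp
  have hd : HasDerivAt (fun u : ℂ => 10*u*(u-3)*(u^2+3)^2)
      (10*(s^2+3)*((2*s-3)*(s^2+3)+s*(s-3)*(4*s))) s := by
    have := ((hi.const_mul 10).mul (hi.sub_const 3)).mul ((h2.add_const 3).pow 2)
    refine HasDerivAt.congr_deriv this ?_
    simp
    ring
  have h := hn.div hd (by simp [*])
  have e := h.deriv
  refine Eq.trans e ?_
  field_simp

/-- Parametric algebraic solution of the sixth Painlevé equation. -/
theorem stmt_14 (s : ℂ)
    (h1 : s ≠ -3)
    (h2 : s ≠ 1)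
    (h3 : s^2+3 ≠ 0)
    (hdt : deriv tFun14 s ≠ 0)
    (ht0 : tFun14 s ≠ 0) (ht1 : tFun14 s ≠ 1)
    (hy0 : yFun14 s ≠ 0) (hy1 : yFun14 s ≠ 1) (hyt : yFun14 s ≠ tFun14 s) :
    deriv (fun u => deriv yFun14 u / deriv tFun14 u) s / deriv tFun14 s =
      (1/2) * (1/(yFun14 s) + 1/(yFun14 s - 1) + 1/(yFun14 s - tFun14 s)) *
          (deriv yFun14 s / deriv tFun14 s)^2
        - (1/(tFun14 s) + 1/(tFun14 s - 1) + 1/(yFun14 s - tFun14 s)) *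
          (deriv yFun14 s / deriv tFun14 s)
        + (yFun14 s * (yFun14 s - 1) * (yFun14 s - tFun14 s) /
            ((tFun14 s)^2 * (tFun14 s - 1)^2)) *
          ((25/32 : ℂ) + (-1/32 : ℂ) * tFun14 s / (yFun14 s)^2
            + (1/32 : ℂ) * (tFun14 s - 1) / (yFun14 s - 1)^2
            + (15/32 : ℂ) * tFun14 s * (tFun14 s - 1) / (yFun14 s - tFun14 s)^2) := by
  have a : s + 3 ≠ 0 := fun h => h1 (eq_neg_of_add_eq_zero_left h)
  have b : s - 1 ≠ 0 := sub_ne_zero.2 h2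
  have T := t_hd s a b
  have Y := y_hd s a b h3
  have s0 : s ≠ 0 := by
    rintro rfl
    simp [tFun14] at ht0
  have s3 : s - 3 ≠ 0 := by
    intro h
    apply hdt
    rw [T, h]
    simp
  have P : (fun u => deriv yFun14 u / deriv tFun14 u) =ᶠ[nhds s]
      (fun u : ℂ => (u^4+2*u^3-4*u^2-18*u+3)*(u+3)^2/(10*u*(u-3)*(u^2+3)^2)) := by
    have ca : ∀ᶠ u in nhds s, u + 3 ≠ 0 :=
      (by fun_prop : ContinuousAt (fun u : ℂ => u + 3) s).eventually_ne a
    have cb : ∀ᶠ u in nhds s, u - 1 ≠ 0 :=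
      (by fun_prop : ContinuousAt (fun u : ℂ => u - 1) s).eventually_ne b
    have cc : ∀ᶠ u in nhds s, u^2 + 3 ≠ 0 :=
      (by fun_prop : ContinuousAt (fun u : ℂ => u^2 + 3) s).eventually_ne h3
    have cd : ∀ᶠ u in nhds s, u - 3 ≠ 0 :=
      (by fun_prop : ContinuousAt (fun u : ℂ => u - 3) s).eventually_ne s3
    have ce : ∀ᶠ u in nhds s, u ≠ 0 :=
      (by fun_prop : ContinuousAt (fun u : ℂ => u) s).eventually_ne s0
    filter_upwards [ca, cb, cc, cd, ce] with u ua ub uc ud ue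
    rw [t_hd u ua ub, y_hd u ua ub uc]
    field_simp
    ring
  have p0 := P.eq_of_nhds
  rw [P.deriv_eq, p_hd s s0 s3 h3, p0, T]
  have et : tFun14 s = 16*s^3/((s+3)^3*(s-1)) := by
    simp only [tFun14]; norm_num
  have ey : yFun14 s = 4*(s^2+4*s-1)*s^2/(5*(s+3)*(s^2+3)*(s-1)) := rfl
  have et1 : tFun14 s - 1 = -((s-3)^3*(s+1))/((s+3)^3*(s-1)) := by
    rw [et]; field_simp; ring
  have ey1 : yFun14 s - 1 = -((s-3)^2*(s^2-5))/(5*(s+3)*(s^2+3)*(s-1)) := by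
    rw [ey]; field_simp; ring
  have eyt : yFun14 s - tFun14 s = 4*s^2*(s-3)^2*(s^2-4*s-1)/(5*(s+3)^3*(s^2+3)*(s-1)) := by
    rw [ey, et]; field_simp; ring
  have n1 : s + 1 ≠ 0 := by
    intro h; apply sub_ne_zero.2 ht1; rw [et1, h]; simp
  have n2 : s^2 - 5 ≠ 0 := by
    intro h; apply sub_ne_zero.2 hy1; rw [ey1, h]; simp
  have n3 : s^2-4*s-1 ≠ 0 := by
    intro h; apply sub_ne_zero.2 hyt; rw [eyt, h]; simp
  have n4 : s^2+4*s-1 ≠ 0 := by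
    intro h; apply hy0; rw [ey, h]; simp
  rw [et1, ey1, eyt, et, ey]
  have n5 : s*(s-4)-1 ≠ 0 := by
    intro h; apply n3; linear_combination h
  have n6 : s*(s+4)-1 ≠ 0 := by
    intro h; apply n4; linear_combination h
  clear et et1 ey ey1 eyt p0 P T Y hdt ht0 ht1 hy0 hy1 hyt
  field_simp
  ring
end

section
/- Define the rational functions of s ∈ ℂ: t(s) = −(2s²+s+1)²(3s−1)³/(2(7s²+1)²) and y(s) = −(s−1)(2s²+s+1)(3s−1)²/(2(7s²+1)(3s²+1)). Then for every s ∈ ℂ such that 7s²+1 ≠ 0, 3s²+1 ≠ 0, t'(s) ≠ 0, t(s) ∉ {0,1}, and y(s) ∉ {0, 1, t(s)}, the pair (t, y) is a parametric solution of the sixth Painlevé equation PVI(α,β,γ,δ) at s with θ-tuple (θ₀, θ₁, θ_t, θ_∞) = (1/7, 1/7, 1/7, 5/7), i.e. α = 2/49, β = −1/98, γ = 1/98, δ = 24/49. -/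
noncomputable def tFun16 : ℂ → ℂ := fun s => -((2*s^2+s+1)^2*(3*s-1)^3)/(2*(7*s^2+1)^2)

noncomputable def yFun16 : ℂ → ℂ := fun s => -((s-1)*(2*s^2+s+1)*(3*s-1)^2)/(2*(7*s^2+1)*(3*s^2+1))


theorem aux_t16 (s : ℂ) (h1 : 7*s^2+1 ≠ 0) :
    deriv tFun16 s = -7*((2*s^2+s+1)*(3*s-1)^2*(3*s+1)^2*(2*s^2-s+1))/(2*(7*s^2+1)^3) := by
  have hi := hasDerivAt_id s
  have hA : HasDerivAt (fun s : ℂ => 2*s^2+s+1) (4*s+1) s := by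
    have := (((hi.pow 2).const_mul 2).add hi).add_const 1
    exact this.congr_deriv (by simp; try ring)
  have hB : HasDerivAt (fun s : ℂ => 3*s-1) 3 s := by
    have := (hi.const_mul 3).sub_const 1
    exact this.congr_deriv (by simp)
  have hC : HasDerivAt (fun s : ℂ => 7*s^2+1) (14*s) s := by
    have := ((hi.pow 2).const_mul 7).add_const 1
    exact this.congr_deriv (by simp; try ring)
  have h := ((hA.pow 2).mul (hB.pow 3)).neg.div ((hC.pow 2).const_mul 2)
    (mul_ne_zero two_ne_zero (pow_ne_zero 2 h1))
  have h' : HasDerivAt tFun16 _ s := h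
  rw [h'.deriv]
  simp only [Pi.mul_apply, Pi.pow_apply, Pi.neg_apply, Pi.add_apply, Pi.sub_apply]
  rw [div_eq_div_iff (by repeat' first | assumption | exact OfNat.ofNat_ne_zero _ | apply pow_ne_zero | apply mul_ne_zero) (by repeat' first | assumption | exact OfNat.ofNat_ne_zero _ | apply pow_ne_zero | apply mul_ne_zero)]
  ring

theorem aux_y16 (s : ℂ) (h1 : 7*s^2+1 ≠ 0) (h2 : 3*s^2+1 ≠ 0) :
    deriv yFun16 s = (3*s-1)*(3*s+1)*(3+9*s^2-23*s^4-21*s^6)/((7*s^2+1)^2*(3*s^2+1)^2) := by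
  have hi := hasDerivAt_id s
  have hA : HasDerivAt (fun s : ℂ => 2*s^2+s+1) (4*s+1) s := by
    have := (((hi.pow 2).const_mul 2).add hi).add_const 1
    exact this.congr_deriv (by simp; try ring)
  have hB : HasDerivAt (fun s : ℂ => 3*s-1) 3 s := by
    have := (hi.const_mul 3).sub_const 1
    exact this.congr_deriv (by simp)
  have hC : HasDerivAt (fun s : ℂ => 7*s^2+1) (14*s) s := by
    have := ((hi.pow 2).const_mul 7).add_const 1
    exact this.congr_deriv (by simp; try ring)
  have hE : HasDerivAt (fun s : ℂ => 3*s^2+1) (6*s) s := by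
    have := ((hi.pow 2).const_mul 3).add_const 1
    exact this.congr_deriv (by simp; try ring)
  have hS : HasDerivAt (fun s : ℂ => s-1) 1 s := hi.sub_const 1
  have h := ((hS.mul hA).mul (hB.pow 2)).neg.div ((hC.const_mul 2).mul hE)
    (mul_ne_zero (mul_ne_zero two_ne_zero h1) h2)
  have h' : HasDerivAt yFun16 _ s := h
  rw [h'.deriv]
  simp only [Pi.mul_apply, Pi.pow_apply, Pi.neg_apply, Pi.add_apply, Pi.sub_apply]
  rw [div_eq_div_iff (by repeat' first | assumption | exact OfNat.ofNat_ne_zero _ | apply pow_ne_zero | apply mul_ne_zero) (by repeat' first | assumption | exact OfNat.ofNat_ne_zero _ | apply pow_ne_zero | apply mul_ne_zero)]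
  ring

theorem aux_p16 (s : ℂ) (h1 : 7*s^2+1 ≠ 0) (h2 : 3*s^2+1 ≠ 0)
    (hA : 2*s^2+s+1 ≠ 0) (hB : 3*s-1 ≠ 0) (hH : 3*s+1 ≠ 0) (hG : 2*s^2-s+1 ≠ 0) :
    deriv (fun u => deriv yFun16 u / deriv tFun16 u) s =
      -8*(s*(s-1)*(s+1)*(15+160*s^2+1228*s^4+7108*s^6+20043*s^8+24948*s^10+7938*s^12))/
        (7*((2*s^2+s+1)^2*(3*s-1)^2*(3*s^2+1)^3*(3*s+1)^2*(2*s^2-s+1)^2)) := by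
  have e : (fun u => deriv yFun16 u / deriv tFun16 u) =ᶠ[nhds s] fun u =>
      (-2*(3+30*u^2+40*u^4-182*u^6-147*u^8))/
        (7*((4*u^4+3*u^2+1)*(9*u^2-1)*(3*u^2+1)^2)) := by
    have n1 : ∀ᶠ u : ℂ in nhds s, 7*u^2+1 ≠ 0 :=
      ContinuousAt.eventually_ne (by fun_prop) h1
    have n2 : ∀ᶠ u : ℂ in nhds s, 3*u^2+1 ≠ 0 :=
      ContinuousAt.eventually_ne (by fun_prop) h2
    have n3 : ∀ᶠ u : ℂ in nhds s, 2*u^2+u+1 ≠ 0 :=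
      ContinuousAt.eventually_ne (by fun_prop) hA
    have n4 : ∀ᶠ u : ℂ in nhds s, 3*u-1 ≠ 0 :=
      ContinuousAt.eventually_ne (by fun_prop) hB
    have n5 : ∀ᶠ u : ℂ in nhds s, 3*u+1 ≠ 0 :=
      ContinuousAt.eventually_ne (by fun_prop) hH
    have n6 : ∀ᶠ u : ℂ in nhds s, 2*u^2-u+1 ≠ 0 :=
      ContinuousAt.eventually_ne (by fun_prop) hG
    filter_upwards [n1, n2, n3, n4, n5, n6] with u k1 k2 k3 k4 k5 k6
    rw [aux_t16 u k1, aux_y16 u k1 k2]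
    have q1 : 4*u^4+3*u^2+1 = (2*u^2+u+1)*(2*u^2-u+1) := by ring
    have q2 : 9*u^2-1 = (3*u-1)*(3*u+1) := by ring
    have q3 : 3+30*u^2+40*u^4-182*u^6-147*u^8 = (3+9*u^2-23*u^4-21*u^6)*(7*u^2+1) := by ring
    rw [q1, q2, q3]
    generalize 3+9*u^2-23*u^4-21*u^6 = N
    generalize 2*u^2+u+1 = a at *
    generalize 2*u^2-u+1 = b at *
    generalize 3*u-1 = c at *
    generalize 3*u+1 = d at *
    generalize 3*u^2+1 = e at *
    generalize 7*u^2+1 = f at *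
    field_simp
  rw [e.deriv_eq]
  have hi := hasDerivAt_id s
  have p1 : 4*s^4+3*s^2+1 = (2*s^2+s+1)*(2*s^2-s+1) := by ring
  have p2 : 9*s^2-1 = (3*s-1)*(3*s+1) := by ring
  have hN : HasDerivAt (fun u : ℂ => -2*(3+30*u^2+40*u^4-182*u^6-147*u^8))
      (-2*(60*s+160*s^3-1092*s^5-1176*s^7)) s := by
    have := ((((((hi.pow 2).const_mul 30).const_add 3).add ((hi.pow 4).const_mul 40)).sub
      ((hi.pow 6).const_mul 182)).sub ((hi.pow 8).const_mul 147)).const_mul (-2)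
    exact this.congr_deriv (by simp; try ring)
  have hQ : HasDerivAt (fun u : ℂ => 4*u^4+3*u^2+1) (16*s^3+6*s) s := by
    have := (((hi.pow 4).const_mul 4).add ((hi.pow 2).const_mul 3)).add_const 1
    exact this.congr_deriv (by simp; try ring)
  have hR : HasDerivAt (fun u : ℂ => 9*u^2-1) (18*s) s := by
    have := ((hi.pow 2).const_mul 9).sub_const 1
    exact this.congr_deriv (by simp; try ring)
  have hE : HasDerivAt (fun s : ℂ => 3*s^2+1) (6*s) s := by
    have := ((hi.pow 2).const_mul 3).add_const 1
    exact this.congr_deriv (by simp; try ring)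
  have hQ0 : 4*s^4+3*s^2+1 ≠ 0 := by rw [p1]; exact mul_ne_zero hA hG
  have hR0 : 9*s^2-1 ≠ 0 := by rw [p2]; exact mul_ne_zero hB hH
  have h := hN.div (((hQ.mul hR).mul (hE.pow 2)).const_mul 7)
    (mul_ne_zero (by norm_num) (mul_ne_zero (mul_ne_zero hQ0 hR0) (pow_ne_zero 2 h2)))
  have h' : HasDerivAt (fun u : ℂ => (-2*(3+30*u^2+40*u^4-182*u^6-147*u^8))/
        (7*((4*u^4+3*u^2+1)*(9*u^2-1)*(3*u^2+1)^2))) _ s := h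
  rw [h'.deriv]
  have r : (2*s^2+s+1)^2*(3*s-1)^2*(3*s^2+1)^3*(3*s+1)^2*(2*s^2-s+1)^2
      = (4*s^4+3*s^2+1)^2*(9*s^2-1)^2*(3*s^2+1)^3 := by rw [p1, p2]; ring
  rw [r]
  simp only [Pi.mul_apply, Pi.pow_apply, Pi.neg_apply, Pi.add_apply, Pi.sub_apply]
  rw [div_eq_div_iff (by repeat' first | assumption | exact OfNat.ofNat_ne_zero _ | apply pow_ne_zero | apply mul_ne_zero) (by repeat' first | assumption | exact OfNat.ofNat_ne_zero _ | apply pow_ne_zero | apply mul_ne_zero)]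
  ring

/-- Parametric algebraic solution of the sixth Painlevé equation. -/
theorem stmt_16 (s : ℂ)
    (h1 : 7*s^2+1 ≠ 0)
    (h2 : 3*s^2+1 ≠ 0)
    (hdt : deriv tFun16 s ≠ 0)
    (ht0 : tFun16 s ≠ 0) (ht1 : tFun16 s ≠ 1)
    (hy0 : yFun16 s ≠ 0) (hy1 : yFun16 s ≠ 1) (hyt : yFun16 s ≠ tFun16 s) :
    deriv (fun u => deriv yFun16 u / deriv tFun16 u) s / deriv tFun16 s =
      (1/2) * (1/(yFun16 s) + 1/(yFun16 s - 1) + 1/(yFun16 s - tFun16 s)) *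
          (deriv yFun16 s / deriv tFun16 s)^2
        - (1/(tFun16 s) + 1/(tFun16 s - 1) + 1/(yFun16 s - tFun16 s)) *
          (deriv yFun16 s / deriv tFun16 s)
        + (yFun16 s * (yFun16 s - 1) * (yFun16 s - tFun16 s) /
            ((tFun16 s)^2 * (tFun16 s - 1)^2)) *
          ((2/49 : ℂ) + (-1/98 : ℂ) * tFun16 s / (yFun16 s)^2
            + (1/98 : ℂ) * (tFun16 s - 1) / (yFun16 s - 1)^2
            + (24/49 : ℂ) * tFun16 s * (tFun16 s - 1) / (yFun16 s - tFun16 s)^2) := by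
  rw [aux_t16 s h1] at hdt
  have hA : 2*s^2+s+1 ≠ 0 := by rintro h; apply hdt; rw [h]; simp
  have hB : 3*s-1 ≠ 0 := by rintro h; apply hdt; rw [h]; simp
  have hH : 3*s+1 ≠ 0 := by rintro h; apply hdt; rw [h]; simp
  have hG : 2*s^2-s+1 ≠ 0 := by rintro h; apply hdt; rw [h]; simp
  have et : tFun16 s = -((2*s^2+s+1)^2*(3*s-1)^3)/(2*(7*s^2+1)^2) := rfl
  have ey : yFun16 s = -((s-1)*(2*s^2+s+1)*(3*s-1)^2)/(2*(7*s^2+1)*(3*s^2+1)) := rfl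
  have et1 : tFun16 s - 1 = -((2*s^2-s+1)^2*(3*s+1)^3)/(2*(7*s^2+1)^2) := by
    rw [et, eq_div_iff (by repeat' first | assumption | exact OfNat.ofNat_ne_zero _ | apply pow_ne_zero | apply mul_ne_zero), sub_mul, div_mul_cancel₀ _ (by repeat' first | assumption | exact OfNat.ofNat_ne_zero _ | apply pow_ne_zero | apply mul_ne_zero)]; ring
  have ey1 : yFun16 s - 1 = -((s+1)*(2*s^2-s+1)*(3*s+1)^2)/(2*(7*s^2+1)*(3*s^2+1)) := by
    rw [ey, eq_div_iff (by repeat' first | assumption | exact OfNat.ofNat_ne_zero _ | apply pow_ne_zero | apply mul_ne_zero), sub_mul, div_mul_cancel₀ _ (by repeat' first | assumption | exact OfNat.ofNat_ne_zero _ | apply pow_ne_zero | apply mul_ne_zero)]; ring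
  have eyt : yFun16 s - tFun16 s =
      s*(2*s^2+s+1)*(3*s-1)^2*(2*s^2-s+1)*(3*s+1)^2/(2*(7*s^2+1)^2*(3*s^2+1)) := by
    rw [ey, et, div_sub_div _ _ (by repeat' first | assumption | exact OfNat.ofNat_ne_zero _ | apply pow_ne_zero | apply mul_ne_zero) (by repeat' first | assumption | exact OfNat.ofNat_ne_zero _ | apply pow_ne_zero | apply mul_ne_zero),
      div_eq_div_iff (by repeat' first | assumption | exact OfNat.ofNat_ne_zero _ | apply pow_ne_zero | apply mul_ne_zero) (by repeat' first | assumption | exact OfNat.ofNat_ne_zero _ | apply pow_ne_zero | apply mul_ne_zero)]; ring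
  have hs : s ≠ 0 := by
    intro h; apply sub_ne_zero.2 hyt; rw [eyt, h]; simp
  have hsm : s - 1 ≠ 0 := by
    intro h; apply hy0; rw [ey, h]; simp
  have hsp : s + 1 ≠ 0 := by
    intro h; apply sub_ne_zero.2 hy1; rw [ey1, h]; simp
  rw [aux_p16 s h1 h2 hA hB hH hG, aux_t16 s h1, aux_y16 s h1 h2, et1, ey1, eyt, et, ey]
  clear et et1 ey ey1 eyt hdt ht0 ht1 hy0 hy1 hyt
  obtain ⟨N, eN⟩ : ∃ x, x = 3+9*s^2-23*s^4-21*s^6 := ⟨_, rfl⟩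
  obtain ⟨K, eK⟩ : ∃ x, x = 15+160*s^2+1228*s^4+7108*s^6+20043*s^8+24948*s^10+7938*s^12 :=
    ⟨_, rfl⟩
  obtain ⟨a, ea⟩ : ∃ x, x = 2*s^2+s+1 := ⟨_, rfl⟩
  obtain ⟨b, eb⟩ : ∃ x, x = 2*s^2-s+1 := ⟨_, rfl⟩
  obtain ⟨c, ec⟩ : ∃ x, x = 3*s-1 := ⟨_, rfl⟩
  obtain ⟨d, ed⟩ : ∃ x, x = 3*s+1 := ⟨_, rfl⟩
  obtain ⟨e, ee⟩ : ∃ x, x = 3*s^2+1 := ⟨_, rfl⟩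
  obtain ⟨f, ef⟩ : ∃ x, x = 7*s^2+1 := ⟨_, rfl⟩
  obtain ⟨m, em⟩ : ∃ x, x = s-1 := ⟨_, rfl⟩
  obtain ⟨n, en⟩ : ∃ x, x = s+1 := ⟨_, rfl⟩
  rw [← eN, ← eK, ← ea, ← eb, ← ec, ← ed, ← ee, ← ef, ← em, ← en]
  rw [← ea] at hA
  rw [← eb] at hG
  rw [← ec] at hB
  rw [← ed] at hH
  rw [← ee] at h2
  rw [← ef] at h1
  rw [← em] at hsm
  rw [← en] at hsp
  field_simp
  subst eN eK ea eb ec ed ee ef em en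
  ring
end

section
/- Let i denote the imaginary unit and √3 the positive real square root of 3, and define the complex constants ρ = (1 − 3i√3)/112, a = (27 − 39i√3)/98, ĉ₀ = (−5697 + 2349i√3)/268912, ĉ₁ = −(513 + 435i√3)/784, b̂₀ = (60507 + 142803i√3)/13176688, b̂₁ = (249399 − 38313i√3)/134456, b̂₂ = (−4293 + 28251i√3)/5488, b̂₃ = −(83 + 129i√3)/28. Then for every x ∈ ℂ the identity ρ·x·(x − a)⁷ − (x − 1)(x² + ĉ₁x + ĉ₀)³ = ρ·(x⁴ + b̂₃x³ + b̂₂x² + b̂₁x + b̂₀)² holds. Equivalently, the degree-8 rational function z(x) = ρ·x·(x − a)⁷/((x − 1)(x² + ĉ₁x + ĉ₀)³) satisfies z(x) − 1 = ρ·(x⁴ + b̂₃x³ + b̂₂x² + b̂₁x + b̂₀)²/((x − 1)(x² + ĉ₁x + ĉ₀)³); this is the Belyi function of type R(7+1|2+2+2+2|3+3+1+1) that generates the three irreducible octic transformations of the Gauss hypergeometric function. -/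
open Complex

/-- The polynomial identity establishing the octic Belyi function of type
`R(7+1|2+2+2+2|3+3+1+1)` generating the three irreducible octic transformations
of the Gauss hypergeometric function. -/
theorem stmt_19
    (ρ a c0 c1 b0 b1 b2 b3 : ℂ)
    (hρ : ρ = (1 - 3*I*(Real.sqrt 3 : ℂ))/112)
    (ha : a = (27 - 39*I*(Real.sqrt 3 : ℂ))/98)
    (hc0 : c0 = (-5697 + 2349*I*(Real.sqrt 3 : ℂ))/268912)
    (hc1 : c1 = -((513 + 435*I*(Real.sqrt 3 : ℂ))/784))
    (hb0 : b0 = (60507 + 142803*I*(Real.sqrt 3 : ℂ))/13176688)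
    (hb1 : b1 = (249399 - 38313*I*(Real.sqrt 3 : ℂ))/134456)
    (hb2 : b2 = (-4293 + 28251*I*(Real.sqrt 3 : ℂ))/5488)
    (hb3 : b3 = -((83 + 129*I*(Real.sqrt 3 : ℂ))/28)) :
    ∀ x : ℂ,
      ρ*x*(x - a)^7 - (x - 1)*(x^2 + c1*x + c0)^3 =
        ρ*(x^4 + b3*x^3 + b2*x^2 + b1*x + b0)^2 ∧
      ((x - 1)*(x^2 + c1*x + c0)^3 ≠ 0 →
        ρ*x*(x - a)^7 / ((x - 1)*(x^2 + c1*x + c0)^3) - 1 =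
          ρ*(x^4 + b3*x^3 + b2*x^2 + b1*x + b0)^2 /
            ((x - 1)*(x^2 + c1*x + c0)^3)) := by
  intro x
  have key : ρ*x*(x - a)^7 - (x - 1)*(x^2 + c1*x + c0)^3 =
        ρ*(x^4 + b3*x^3 + b2*x^2 + b1*x + b0)^2 := by
    have hs : (I * (Real.sqrt 3 : ℂ))^2 = -3 := by
      rw [mul_pow, I_sq, ← ofReal_pow, Real.sq_sqrt (by norm_num)]
      norm_num
    simp only [mul_assoc _ I _] at hρ ha hc0 hc1 hb0 hb1 hb2 hb3
    generalize I * (Real.sqrt 3 : ℂ) = s at *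
    have h3 : s^3 = -3*s := by linear_combination s*hs
    have h4 : s^4 = 9 := by linear_combination (s^2-3)*hs
    have h5 : s^5 = 9*s := by linear_combination s*h4
    have h6 : s^6 = -27 := by linear_combination s^2*h4+9*hs
    have h7 : s^7 = -27*s := by linear_combination s*h6
    have h8 : s^8 = 81 := by linear_combination (s^4+9)*h4
    subst hρ ha hc0 hc1 hb0 hb1 hb2 hb3
    ring_nf
    simp only [hs, h3, h4, h5, h6, h7, h8]
    ring
  refine ⟨key, fun h => ?_⟩
  rw [← key, sub_div, div_self h]
end
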